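/- arXiv:1510.06964 — 3 statements merged into one kernel-verified Lean document; each statement's English description precedes it below -/
import Mathlib

section
/- Let G be a connected graph in which some block is neither a complete graph nor an odd cycle. Then G is degree-choosable: for every list assignment L with |L(v)| equal to the degree of v for every vertex v, G admits a proper colouring in which each vertex receives a colour from its list. -/
open SimpleGraph
open scoped Classical

variable {V : Type*}

/-- A proper `k`-colouring of `G`. -/
def IsProperColoring (G : SimpleGraph V) (k : ℕ) (c : V → Fin k) : Prop :=
  ∀ ⦃u v : V⦄, G.Adj u v → c u ≠ c v

/-- `c'` is obtained from `c` by a single Kempe change: the colours `a` and `b` are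
swapped on the connected component (of the subgraph induced by the vertices coloured
`a` or `b`) containing `v0`, and all other vertices keep their colour. -/

def KempeStep (G : SimpleGraph V) (k : ℕ) (c c' : V → Fin k) : Prop :=
  ∃ a b : Fin k, ∃ v0 : {x : V | c x = a ∨ c x = b},
    ∀ v : V, c' v =
      if h : c v = a ∨ c v = b then
        if (G.induce {x : V | c x = a ∨ c x = b}).Reachable v0 ⟨v, h⟩
          then Equiv.swap a b (c v) else c v
      else c v

/-- Two colourings are Kempe equivalent if one is obtained from the other by a finite
sequence of Kempe changes. -/
def KempeEquiv (G : SimpleGraph V) (k : ℕ) (c c' : V → Fin k) : Prop :=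
  Relation.ReflTransGen (KempeStep G k) c c'

/-- The set of all proper `k`-colourings of `G` forms a single Kempe class. -/
def KempeClass (G : SimpleGraph V) (k : ℕ) : Prop :=
  ∀ c c' : V → Fin k, IsProperColoring G k c → IsProperColoring G k c' →
    KempeEquiv G k c c'

/-- `G` is `d`-degenerate: every nonempty set of vertices contains a vertex with at
most `d` neighbours inside the set. -/
def Degenerate (G : SimpleGraph V) (d : ℕ) : Prop :=
  ∀ S : Set V, S.Nonempty → ∃ v ∈ S, (S ∩ G.neighborSet v).ncard ≤ d

/-- `G` is 3-connected: more than 3 vertices, and deleting any at most 2 vertices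
leaves it connected. -/
def ThreeConnected [Fintype V] (G : SimpleGraph V) : Prop :=
  3 < Fintype.card V ∧ ∀ S : Set V, S.ncard ≤ 2 → (G.induce Sᶜ).Connected

/-- `B` is a block of `G`: a maximal set of vertices inducing a connected subgraph
with no cut-vertex. -/
def IsBlock (G : SimpleGraph V) (B : Set V) : Prop :=
  (G.induce B).Connected ∧
  (∀ x ∈ B, (G.induce (B \ {x})).Connected ∨ B \ {x} = ∅) ∧
  ∀ B' : Set V, B ⊆ B' →
    ((G.induce B').Connected ∧
      ∀ x ∈ B', (G.induce (B' \ {x})).Connected ∨ B' \ {x} = ∅) → B' = B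

/-- number of neighbours of `v` inside `S`. -/
def dgIn {V : Type*} (G : SimpleGraph V) [DecidableRel G.Adj] (S : Finset V) (v : V) : ℕ :=
  (S.filter (fun w => G.Adj v w)).card

/-- `S` is colourable from the lists `L`. -/
def ColOn {V : Type*} (G : SimpleGraph V) (S : Finset V) (L : V → Finset ℕ) : Prop :=
  ∃ c : V → ℕ, (∀ v ∈ S, c v ∈ L v) ∧ ∀ x ∈ S, ∀ y ∈ S, G.Adj x y → c x ≠ c y

/-- `S` induces a connected (or empty) graph. -/
def ConnOn {V : Type*} (G : SimpleGraph V) (S : Finset V) : Prop :=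
  ∀ T : Finset V, T ⊆ S → T.Nonempty → T ≠ S → ∃ u ∈ T, ∃ v ∈ S, v ∉ T ∧ G.Adj u v

section aux
variable {V : Type*} [DecidableEq V] (G : SimpleGraph V) [DecidableRel G.Adj]

lemma dgIn_mono {S T : Finset V} (h : T ⊆ S) (v : V) : dgIn G T v ≤ dgIn G S v :=
  Finset.card_le_card (Finset.filter_subset_filter _ h)

lemma dgIn_lt {S T : Finset V} (h : T ⊆ S) {u v : V} (hv : v ∈ S) (hvT : v ∉ T)
    (huv : G.Adj u v) : dgIn G T u < dgIn G S u := by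
  apply Finset.card_lt_card
  refine ⟨Finset.filter_subset_filter _ h, fun hh => ?_⟩
  have := hh (Finset.mem_filter.2 ⟨hv, huv⟩)
  exact hvT (Finset.mem_filter.1 this).1

lemma extend {R S : Finset V} {L : V → Finset ℕ} (hdis : Disjoint R S) (c : V → ℕ)
    (hc : ∀ v ∈ R, c v ∈ L v) (hp : ∀ x ∈ R, ∀ y ∈ R, G.Adj x y → c x ≠ c y)
    (h : ColOn G S (fun v => L v \ (R.filter (fun w => G.Adj v w)).image c)) :
    ColOn G (R ∪ S) L := by
  obtain ⟨d, hd, hdp⟩ := h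
  simp only [Finset.mem_sdiff, Finset.mem_image, Finset.mem_filter, not_exists, not_and] at hd
  have hRS : ∀ x ∈ S, x ∉ R := fun x hx hR => Finset.disjoint_left.1 hdis hR hx
  refine ⟨fun v => if v ∈ R then c v else d v, ?_, ?_⟩
  · intro v hv
    by_cases hR : v ∈ R
    · simpa [hR] using hc v hR
    · have : v ∈ S := by simpa [hR] using hv
      simpa [hR] using (hd v this).1
  · intro x hx y hy hxy
    by_cases hxR : x ∈ R <;> by_cases hyR : y ∈ R
    · simpa [hxR, hyR] using hp x hxR y hyR hxy
    · have : y ∈ S := by simpa [hyR] using hy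
      simpa [hxR, hyR] using (hd y this).2 x ⟨hxR, hxy.symm⟩
    · have : x ∈ S := by simpa [hxR] using hx
      simpa [hxR, hyR] using fun e => (hd x this).2 y ⟨hyR, hxy⟩ e.symm
    · have h1 : x ∈ S := by simpa [hxR] using hx
      have h2 : y ∈ S := by simpa [hyR] using hy
      simpa [hxR, hyR] using hdp x h1 y h2 hxy

lemma greedy (L : V → Finset ℕ) (S : Finset V)
    (h : ∀ T ⊆ S, T.Nonempty → ∃ v ∈ T, dgIn G T v < (L v).card) : ColOn G S L := by
  induction S using Finset.strongInduction with
  | H S ih =>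
  rcases S.eq_empty_or_nonempty with rfl | hne
  · exact ⟨fun _ => 0, by simp, by simp⟩
  obtain ⟨v, hv, hlt⟩ := h S subset_rfl hne
  obtain ⟨c, hc, hp⟩ := ih (S.erase v) (Finset.erase_ssubset hv)
    (fun T hT hn => h T (hT.trans (Finset.erase_subset _ _)) hn)
  have : ColOn G (S.erase v ∪ {v}) L := by
    apply extend G (by simp) c hc hp
    have hcard : (((S.erase v).filter (fun w => G.Adj v w)).image c).card < (L v).card :=
      lt_of_le_of_lt (Finset.card_image_le.trans (dgIn_mono G (Finset.erase_subset v S) v)) hlt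
    obtain ⟨a, ha, ha'⟩ := Finset.exists_mem_notMem_of_card_lt_card hcard
    refine ⟨fun _ => a, ?_, ?_⟩
    · intro w hw
      obtain rfl := Finset.mem_singleton.1 hw
      exact Finset.mem_sdiff.2 ⟨ha, ha'⟩
    · intro x hx y hy hxy
      obtain rfl := Finset.mem_singleton.1 hx
      obtain rfl := Finset.mem_singleton.1 hy
      exact absurd hxy (G.loopless.irrefl _)
  have e : S.erase v ∪ {v} = S := by
    ext x; by_cases hx : x = v <;> simp [hx, hv]
  rwa [e] at this

lemma col_of_strict {L : V → Finset ℕ} {S : Finset V} (hS : ConnOn G S)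
    (hL : ∀ v ∈ S, dgIn G S v ≤ (L v).card) {w : V} (hw : w ∈ S)
    (hlt : dgIn G S w < (L w).card) : ColOn G S L := by
  apply greedy
  intro T hT hne
  by_cases e : T = S
  · subst e; exact ⟨w, hw, hlt⟩
  · obtain ⟨u, hu, v, hv, hvT, huv⟩ := hS T hT hne e
    exact ⟨u, hu, (dgIn_lt G hT hv hvT huv).trans_le (hL u (hT hu))⟩

/-- removal of coloured neighbours keeps the degree condition. -/
lemma card_ext {L : V → Finset ℕ} {R S : Finset V} (hdis : Disjoint R S) (c : V → ℕ) {v : V}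
    (hL : dgIn G (R ∪ S) v ≤ (L v).card) :
    dgIn G S v ≤ (L v \ (R.filter (fun w => G.Adj v w)).image c).card := by
  have h1 : dgIn G (R ∪ S) v = dgIn G R v + dgIn G S v := by
    unfold dgIn
    rw [Finset.filter_union, Finset.card_union_of_disjoint]
    exact Finset.disjoint_filter_filter hdis
  have h2 := Finset.le_card_sdiff ((R.filter (fun w => G.Adj v w)).image c) (L v)
  have h3 : ((R.filter (fun w => G.Adj v w)).image c).card ≤ dgIn G R v := Finset.card_image_le
  omega

lemma col_of_diff {L : V → Finset ℕ} {S : Finset V} {v u : V} (hv : v ∈ S)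
    (hSv : ConnOn G (S.erase v))
    (hL : ∀ v ∈ S, dgIn G S v ≤ (L v).card) (hu : u ∈ S) (huv : G.Adj v u)
    {a : ℕ} (ha : a ∈ L v) (ha' : a ∉ L u) : ColOn G S L := by
  have e : {v} ∪ S.erase v = S := by
    ext x; by_cases hx : x = v <;> simp [hx, hv]
  have hdis : Disjoint {v} (S.erase v) := by simp
  have : ColOn G ({v} ∪ S.erase v) L := by
    apply extend G hdis (fun _ => a)
    · simpa using ha
    · intro x hx y hy hxy
      obtain rfl := Finset.mem_singleton.1 hx
      obtain rfl := Finset.mem_singleton.1 hy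
      exact absurd hxy (G.loopless.irrefl _)
    have hu' : u ∈ S.erase v := Finset.mem_erase.2 ⟨huv.ne', hu⟩
    refine col_of_strict G hSv ?_ hu' ?_
    · intro w hw
      apply card_ext G hdis
      rw [e]
      exact hL w (Finset.mem_of_mem_erase hw)
    · have h1 : L u \ (({v} : Finset V).filter (fun w => G.Adj u w)).image (fun _ => a) = L u := by
        apply Finset.sdiff_eq_self_of_disjoint
        rw [Finset.disjoint_right]
        intro b hb
        simp only [Finset.mem_image] at hb
        obtain ⟨_, _, rfl⟩ := hb
        exact ha'
      rw [h1]
      exact (dgIn_lt G (Finset.erase_subset v S) hv (by simp) huv.symm).trans_le (hL u hu)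
  rwa [e] at this

/-- colour everything outside `C` first. -/
lemma col_outside {L : V → Finset ℕ} {S C : Finset V} (hS : ConnOn G S) (hC : C ⊆ S)
    (hne : C.Nonempty) (hL : ∀ v ∈ S, dgIn G S v ≤ (L v).card) : ColOn G (S \ C) L := by
  apply greedy
  intro T hT hTne
  have hTS : T ⊆ S := hT.trans Finset.sdiff_subset
  obtain ⟨u, hu, v, hv, hvT, huv⟩ := hS T hTS hTne (by
    rintro rfl
    obtain ⟨x, hx⟩ := hne
    exact (Finset.mem_sdiff.1 (hT (hC hx))).2 hx)
  exact ⟨u, hu, (dgIn_lt G hTS hv hvT huv).trans_le (hL u (hTS hu))⟩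

lemma conn_union {S T : Finset V} (hS : ConnOn G S) (hT : ConnOn G T) {u v : V} (hu : u ∈ S)
    (hv : v ∈ T) (huv : G.Adj u v) : ConnOn G (S ∪ T) := by
  intro A hA hne hA'
  by_cases h1 : (A ∩ S).Nonempty ∧ A ∩ S ≠ S
  · obtain ⟨x, hx, y, hy, hyA, hxy⟩ := hS (A ∩ S) Finset.inter_subset_right h1.1 h1.2
    simp only [Finset.mem_inter, not_and] at hx hyA
    exact ⟨x, hx.1, y, Finset.mem_union_left _ hy, fun h => hyA h hy, hxy⟩
  by_cases h2 : (A ∩ T).Nonempty ∧ A ∩ T ≠ T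
  · obtain ⟨x, hx, y, hy, hyA, hxy⟩ := hT (A ∩ T) Finset.inter_subset_right h2.1 h2.2
    simp only [Finset.mem_inter, not_and] at hx hyA
    exact ⟨x, hx.1, y, Finset.mem_union_right _ hy, fun h => hyA h hy, hxy⟩
  have g1 : (∀ x ∈ S, x ∉ A) ∨ S ⊆ A := by
    by_cases h : (A ∩ S).Nonempty
    · right
      have : A ∩ S = S := by by_contra h'; exact h1 ⟨h, h'⟩
      exact Finset.inter_eq_right.1 this
    · left; intro x hx hxA; exact h ⟨x, Finset.mem_inter.2 ⟨hxA, hx⟩⟩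
  have g2 : (∀ x ∈ T, x ∉ A) ∨ T ⊆ A := by
    by_cases h : (A ∩ T).Nonempty
    · right
      have : A ∩ T = T := by by_contra h'; exact h2 ⟨h, h'⟩
      exact Finset.inter_eq_right.1 this
    · left; intro x hx hxA; exact h ⟨x, Finset.mem_inter.2 ⟨hxA, hx⟩⟩
  rcases g1 with g1 | g1 <;> rcases g2 with g2 | g2
  · obtain ⟨x, hx⟩ := hne
    rcases Finset.mem_union.1 (hA hx) with h | h
    · exact absurd hx (g1 x h)
    · exact absurd hx (g2 x h)
  · exact ⟨v, g2 hv, u, Finset.mem_union_left _ hu, g1 u hu, huv.symm⟩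
  · exact ⟨u, g1 hu, v, Finset.mem_union_right _ hv, g2 v hv, huv⟩
  · exact absurd (Finset.Subset.antisymm hA (Finset.union_subset g1 g2)) hA'

lemma conn_single (v : V) : ConnOn G {v} := by
  intro T hT hne h
  exact absurd (hne.subset_singleton_iff.1 hT) h

lemma conn_path (p : ℕ → V) (a b : ℕ) (h : ∀ i, a ≤ i → i < b → G.Adj (p i) (p (i + 1))) :
    ConnOn G ((Finset.Icc a b).image p) := by
  by_cases hab : a ≤ b
  · induction b, hab using Nat.le_induction with
    | base => simpa using conn_single G (p a)
    | succ b hab ih =>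
      have e : (Finset.Icc a (b + 1)).image p = (Finset.Icc a b).image p ∪ {p (b + 1)} := by
        rw [← Finset.image_singleton, ← Finset.image_union]
        congr 1
        ext x; simp; omega
      rw [e]
      exact conn_union G (ih fun i h1 h2 => h i h1 (by omega)) (conn_single G _)
        (Finset.mem_image_of_mem p (Finset.mem_Icc.2 ⟨hab, le_rfl⟩)) (by simp)
        (h b hab (by omega))
  · rw [Finset.Icc_eq_empty hab]
    intro T hT hne h
    exact absurd (Finset.subset_empty.1 (by simpa using hT)) hne.ne_empty

lemma conn_cycle_erase (p : ℕ → V) (a b : ℕ) (hinj : Set.InjOn p (Set.Icc a b))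
    (h : ∀ i, a ≤ i → i < b → G.Adj (p i) (p (i + 1))) (hba : G.Adj (p b) (p a))
    {v : V} (hv : v ∈ (Finset.Icc a b).image p) :
    ConnOn G (((Finset.Icc a b).image p).erase v) := by
  obtain ⟨i, hi, rfl⟩ := Finset.mem_image.1 hv
  rw [Finset.mem_Icc] at hi
  have key : ∀ x, x ∈ ((Finset.Icc a b).image p).erase (p i) ↔
      ∃ l, a ≤ l ∧ l ≤ b ∧ l ≠ i ∧ p l = x := by
    intro x
    simp only [Finset.mem_erase, Finset.mem_image, Finset.mem_Icc]
    constructor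
    · rintro ⟨hx, l, hl, rfl⟩
      exact ⟨l, hl.1, hl.2, fun e => hx (e ▸ rfl), rfl⟩
    · rintro ⟨l, h1, h2, h3, rfl⟩
      exact ⟨fun e => h3 (hinj ⟨h1, h2⟩ hi e), l, ⟨h1, h2⟩, rfl⟩
  rcases eq_or_lt_of_le hi.1 with e1 | e1
  · have : ((Finset.Icc a b).image p).erase (p i) = (Finset.Icc (a + 1) b).image p := by
      ext x; rw [key]; simp only [Finset.mem_image, Finset.mem_Icc]
      constructor
      · rintro ⟨l, h1, h2, h3, rfl⟩; exact ⟨l, ⟨by omega, h2⟩, rfl⟩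
      · rintro ⟨l, h1, rfl⟩; exact ⟨l, by omega, by omega, by omega, rfl⟩
    rw [this]
    exact conn_path G p _ _ fun l h1 h2 => h l (by omega) h2
  rcases eq_or_lt_of_le hi.2 with e2 | e2
  · have : ((Finset.Icc a b).image p).erase (p i) = (Finset.Icc a (b - 1)).image p := by
      ext x; rw [key]; simp only [Finset.mem_image, Finset.mem_Icc]
      constructor
      · rintro ⟨l, h1, h2, h3, rfl⟩; exact ⟨l, ⟨by omega, by omega⟩, rfl⟩
      · rintro ⟨l, h1, rfl⟩; exact ⟨l, by omega, by omega, by omega, rfl⟩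
    rw [this]
    exact conn_path G p _ _ fun l h1 h2 => h l (by omega) (by omega)
  have : ((Finset.Icc a b).image p).erase (p i) =
      (Finset.Icc (i + 1) b).image p ∪ (Finset.Icc a (i - 1)).image p := by
    ext x; rw [key]; simp only [Finset.mem_image, Finset.mem_Icc, Finset.mem_union]
    constructor
    · rintro ⟨l, h1, h2, h3, rfl⟩
      rcases lt_or_gt_of_ne h3 with h4 | h4
      · exact Or.inr ⟨l, by omega, rfl⟩
      · exact Or.inl ⟨l, by omega, rfl⟩
    · rintro (⟨l, h1, rfl⟩ | ⟨l, h1, rfl⟩) <;> exact ⟨l, by omega, by omega, by omega, rfl⟩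
  rw [this]
  refine conn_union G (conn_path G p _ _ fun l h1 h2 => h l (by omega) (by omega))
    (conn_path G p _ _ fun l h1 h2 => h l (by omega) (by omega)) (u := p b) (v := p a) ?_ ?_ hba
  · exact Finset.mem_image_of_mem p (Finset.mem_Icc.2 ⟨by omega, le_rfl⟩)
  · exact Finset.mem_image_of_mem p (Finset.mem_Icc.2 ⟨le_rfl, by omega⟩)

/-- a maximal path with a prescribed start. -/
lemma max_path (B : Finset V) {x v y : V} (hx : x ∈ B) (hv : v ∈ B) (hy : y ∈ B)
    (hxv : G.Adj x v) (hvy : G.Adj v y) (hxy : x ≠ y) :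
    ∃ (p : ℕ → V) (r : ℕ), 2 ≤ r ∧ p 0 = x ∧ p 1 = v ∧ p 2 = y ∧ Set.InjOn p (Set.Icc 0 r) ∧
      (∀ i ≤ r, p i ∈ B) ∧ (∀ i < r, G.Adj (p i) (p (i + 1))) ∧
      ∀ w ∈ B, G.Adj (p r) w → ∃ i < r, p i = w := by
  let P : ℕ → Prop := fun r => ∃ p : ℕ → V, 2 ≤ r ∧ p 0 = x ∧ p 1 = v ∧ p 2 = y ∧
      Set.InjOn p (Set.Icc 0 r) ∧ (∀ i ≤ r, p i ∈ B) ∧ (∀ i < r, G.Adj (p i) (p (i + 1)))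
  have hP2 : P 2 := by
    refine ⟨fun i => if i = 0 then x else if i = 1 then v else y, le_rfl, rfl, rfl, rfl, ?_, ?_, ?_⟩
    · intro i hi l hl e
      have h1 := hxv.ne
      have h2 := hvy.ne
      have hi' := hi.2
      have hl' := hl.2
      interval_cases i <;> interval_cases l <;> simp_all
    · intro i hi
      interval_cases i <;> simp_all
    · intro i hi
      interval_cases i <;> simp_all
  have hb : ∀ r, P r → r ≤ B.card := by
    rintro r ⟨p, -, -, -, -, hinj, hB, -⟩
    have : (Finset.Icc 0 r).card ≤ B.card :=
      Finset.card_le_card_of_injOn p (fun i hi => hB i (by simpa using hi))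
        (by simpa using hinj)
    simp at this
    omega
  classical
  obtain ⟨p, h2, p0, p1, p2, hinj, hB, hadj⟩ := Nat.findGreatest_spec (hb 2 hP2) hP2
  set r := Nat.findGreatest P B.card with hr
  refine ⟨p, r, h2, p0, p1, p2, hinj, hB, hadj, ?_⟩
  intro w hw hrw
  by_contra hcon
  push Not at hcon
  have hnew : ∀ i ≤ r, p i ≠ w := by
    intro i hi
    rcases eq_or_lt_of_le hi with rfl | h
    · exact hrw.ne
    · exact hcon i h
  have hPn : P (r + 1) := by
    have q : ∀ i ≤ r, Function.update p (r + 1) w i = p i := fun i hi =>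
      Function.update_of_ne (by omega) _ _
    have q' : Function.update p (r + 1) w (r + 1) = w := Function.update_self _ _ _
    refine ⟨Function.update p (r + 1) w, by omega, ?_, ?_, ?_, ?_, ?_, ?_⟩
    · rw [q _ (by omega), p0]
    · rw [q _ (by omega), p1]
    · rw [q _ (by omega), p2]
    · intro i hi l hl e
      rcases Nat.lt_or_ge r i with a | a <;> rcases Nat.lt_or_ge r l with b | b
      · have := hi.2; have := hl.2; omega
      · obtain rfl : i = r + 1 := by have := hi.2; omega
        rw [q', q l b] at e
        exact absurd e.symm (hnew l b)
      · obtain rfl : l = r + 1 := by have := hl.2; omega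
        rw [q', q i a] at e
        exact absurd e (hnew i a)
      · rw [q i a, q l b] at e
        exact hinj ⟨by omega, a⟩ ⟨by omega, b⟩ e
    · intro i hi
      rcases Nat.lt_or_ge r i with a | a
      · obtain rfl : i = r + 1 := by omega
        rw [q']; exact hw
      · rw [q i a]; exact hB i a
    · intro i hi
      rcases Nat.lt_or_ge i r with a | a
      · rw [q i (by omega), q (i + 1) (by omega)]; exact hadj i a
      · obtain rfl : i = r := by omega
        rw [q', q _ le_rfl]; exact hrw
  have := Nat.le_findGreatest (hb _ hPn) hPn
  omega
end aux

/-- the structural form of being an odd cycle. -/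
def OddCyc {V : Type*} (G : SimpleGraph V) (B : Finset V) : Prop :=
  ∃ (p : ℕ → V) (r : ℕ), 2 ≤ r ∧ Even r ∧ Set.InjOn p (Set.Icc 0 r) ∧ (∀ i ≤ r, p i ∈ B) ∧
    (∀ v ∈ B, ∃ i ≤ r, p i = v) ∧
    ∀ i l, i < l → l ≤ r → (G.Adj (p i) (p l) ↔ l = i + 1 ∨ (i = 0 ∧ l = r))

section aux2
variable {V : Type*} [DecidableEq V] (G : SimpleGraph V) [DecidableRel G.Adj]

lemma conn_const {S : Finset V} (hS : ConnOn G S) {α : Type*} (f : V → α)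
    (h : ∀ u ∈ S, ∀ v ∈ S, G.Adj u v → f u = f v) : ∀ u ∈ S, ∀ v ∈ S, f u = f v := by
  classical
  intro u hu v hv
  by_contra hne
  obtain ⟨x, hx, y, hy, hyT, hxy⟩ := hS (S.filter fun w => f w = f u) (Finset.filter_subset _ _)
    ⟨u, by simp [hu]⟩ (by
      intro e
      rw [← e] at hv
      exact hne (Finset.mem_filter.1 hv).2.symm)
  rw [Finset.mem_filter] at hx hyT
  exact hyT ⟨hy, (h x hx.1 y hy hxy) ▸ hx.2⟩

lemma exists_induced_path {B : Finset V} (hB : ConnOn G B)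
    (hnc : ∃ a ∈ B, ∃ b ∈ B, a ≠ b ∧ ¬ G.Adj a b) :
    ∃ x ∈ B, ∃ v ∈ B, ∃ y ∈ B, G.Adj x v ∧ G.Adj v y ∧ x ≠ y ∧ ¬ G.Adj x y := by
  obtain ⟨a, ha, b, hb, hab, hadj⟩ := hnc
  obtain ⟨u, hu, w, hw, hwT, huw⟩ := hB (B.filter fun z => z = a ∨ G.Adj a z)
    (Finset.filter_subset _ _) ⟨a, by simp [ha]⟩ (by
      intro e
      rw [← e, Finset.mem_filter] at hb
      rcases hb.2 with h | h
      · exact hab h.symm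
      · exact hadj h)
  rw [Finset.mem_filter] at hu hwT
  have hwT' : ¬ (w = a ∨ G.Adj a w) := fun h => hwT ⟨hw, h⟩
  push Not at hwT'
  rcases hu.2 with rfl | h
  · exact absurd huw hwT'.2
  · exact ⟨a, ha, u, hu.1, w, hw, h, huw, hwT'.1.symm, hwT'.2⟩

lemma main_block {B : Finset V} (hB : ConnOn G B) (hB2 : ∀ x ∈ B, ConnOn G (B.erase x))
    (hnc : ∃ a ∈ B, ∃ b ∈ B, a ≠ b ∧ ¬ G.Adj a b) (hodd : ¬ OddCyc G B)
    (L : V → Finset ℕ) (hL : ∀ v ∈ B, dgIn G B v ≤ (L v).card) : ColOn G B L := by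
  by_contra hcol
  have hEq : ∀ v ∈ B, dgIn G B v = (L v).card := by
    intro v hv
    by_contra h
    exact hcol (col_of_strict G hB hL hv (lt_of_le_of_ne (hL v hv) h))
  have hsub : ∀ v ∈ B, ∀ u ∈ B, G.Adj v u → L v ⊆ L u := by
    intro v hv u hu huv a ha
    by_contra ha'
    exact hcol (col_of_diff G hv (hB2 v hv) hL hu huv ha ha')
  have hLc := conn_const G hB L fun u hu v hv h => (hsub u hu v hv h).antisymm (hsub v hv u hu h.symm)
  obtain ⟨x, hx, v, hv, y, hy, hxv, hvy, hxy, hnxy⟩ := exists_induced_path G hB hnc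
  have hdeg : ∀ u ∈ B, dgIn G B u = (L v).card := fun u hu => by rw [hEq u hu, hLc u hu v hv]
  have hk2 : 2 ≤ (L v).card := by
    rw [← hdeg v hv, ← Finset.card_pair hxy]
    apply Finset.card_le_card
    intro z hz
    simp only [Finset.mem_insert, Finset.mem_singleton] at hz
    rcases hz with rfl | rfl
    · exact Finset.mem_filter.2 ⟨hx, hxv.symm⟩
    · exact Finset.mem_filter.2 ⟨hy, hvy⟩
  obtain ⟨p, r, hr2, p0, p1, p2, hinj, hpB, hadj, hmax⟩ := max_path G B hx hv hy hxv hvy hxy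
  -- first neighbour on the path
  have hex : ∃ j, j + 2 ≤ r ∧ G.Adj (p r) (p j) := by
    by_contra hcon
    push Not at hcon
    have : dgIn G B (p r) ≤ 1 := by
      unfold dgIn
      rw [← Finset.card_singleton (p (r - 1))]
      apply Finset.card_le_card
      intro w hw
      rw [Finset.mem_filter] at hw
      obtain ⟨i, hi, rfl⟩ := hmax w hw.1 hw.2
      have : ¬ i + 2 ≤ r := fun h => hcon i h hw.2
      obtain rfl : i = r - 1 := by omega
      simp
    rw [hdeg _ (hpB r le_rfl)] at this
    omega
  classical
  obtain ⟨hj2, hjadj⟩ := Nat.find_spec hex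
  have hjmin : ∀ i, i < Nat.find hex → ¬ G.Adj (p r) (p i) := by
    intro i hi h
    exact Nat.find_min hex hi ⟨by omega, h⟩
  generalize Nat.find hex = j at hj2 hjadj hjmin
  set C := (Finset.Icc j r).image p with hC
  have hmemC : ∀ z, z ∈ C ↔ ∃ i, j ≤ i ∧ i ≤ r ∧ p i = z := by
    intro z; simp [hC, and_assoc]
  have hCB : C ⊆ B := by
    intro z hz
    obtain ⟨i, -, hi, rfl⟩ := (hmemC z).1 hz
    exact hpB i hi
  have hrC : p r ∈ C := (hmemC _).2 ⟨r, by omega, le_rfl, rfl⟩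
  by_cases hCe : C = B
  swap
  · -- proper cycle
    have hCconn : ConnOn G C := conn_path G p j r fun i _ h => hadj i h
    obtain ⟨c, hc, hcp⟩ := col_outside G hB hCB ⟨_, hrC⟩ hL
    obtain ⟨s, hs, t, ht, htT, hst⟩ := hCconn (C.filter fun z => ∀ w ∈ B \ C, ¬ G.Adj z w)
      (Finset.filter_subset _ _) ⟨p r, by
        rw [Finset.mem_filter]
        refine ⟨hrC, fun w hw hrw => ?_⟩
        rw [Finset.mem_sdiff] at hw
        obtain ⟨i, hi, rfl⟩ := hmax w hw.1 hrw
        by_cases hij : i < j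
        · exact hjmin i hij hrw
        · exact hw.2 ((hmemC _).2 ⟨i, by omega, by omega, rfl⟩)⟩ (by
        intro e
        obtain ⟨z, hz, w, hw, hwC, hzw⟩ := hB C hCB ⟨_, hrC⟩ hCe
        rw [← e, Finset.mem_filter] at hz
        exact hz.2 w (Finset.mem_sdiff.2 ⟨hw, hwC⟩) hzw)
    rw [Finset.mem_filter] at hs htT
    have : ∃ w ∈ B \ C, G.Adj t w := by
      by_contra h
      push Not at h
      exact htT ⟨ht, h⟩
    obtain ⟨w, hw, htw⟩ := this
    apply hcol
    have hdis : Disjoint (B \ C) C := Finset.sdiff_disjoint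
    have e : (B \ C) ∪ C = B := Finset.sdiff_union_of_subset hCB
    rw [← e]
    apply extend G hdis c hc hcp
    refine col_of_diff G hs.1 (conn_cycle_erase G p j r
      (hinj.mono (Set.Icc_subset_Icc_left (Nat.zero_le j))) (fun i _ h => hadj i h) hjadj hs.1) ?_ ht hst
      (a := c w) ?_ ?_
    · intro z hz
      apply card_ext G hdis
      rw [e]; exact hL z (hCB hz)
    · have hwB := (Finset.mem_sdiff.1 hw).1
      rw [Finset.mem_sdiff]
      refine ⟨?_, ?_⟩
      · rw [hLc s (hCB hs.1) w hwB]; exact hc w hw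
      · intro h
        obtain ⟨z, hz, -⟩ := Finset.mem_image.1 h
        rw [Finset.mem_filter] at hz
        exact hs.2 z hz.1 hz.2
    · intro h
      exact (Finset.mem_sdiff.1 h).2
        (Finset.mem_image_of_mem c (Finset.mem_filter.2 ⟨hw, htw⟩))
  -- Hamiltonian cycle
  have hsurj : ∀ z ∈ B, ∃ i, j ≤ i ∧ i ≤ r ∧ p i = z := fun z hz => (hmemC z).1 (hCe ▸ hz)
  obtain rfl : j = 0 := by
    obtain ⟨i, h1, h2, h3⟩ := hsurj _ (hpB 0 (by omega))
    have := hinj ⟨by omega, h2⟩ ⟨by omega, by omega⟩ h3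
    omega
  have hpe : ∀ i l, i ≤ r → l ≤ r → p i = p l → i = l := fun i l hi hl h =>
    hinj ⟨by omega, hi⟩ ⟨by omega, hl⟩ h
  clear_value C
  by_cases hk3 : 3 ≤ (L v).card
  · apply hcol
    obtain ⟨a, ha⟩ : (L v).Nonempty := Finset.card_pos.1 (by omega)
    -- a third neighbour of `v`
    have h3 : ∃ m, 3 ≤ m ∧ m ≤ r ∧ G.Adj (p 1) (p m) := by
      by_contra hcon
      push Not at hcon
      have : dgIn G B v ≤ 2 := by
        rw [← Finset.card_pair hxy]
        apply Finset.card_le_card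
        intro z hz
        rw [Finset.mem_filter] at hz
        obtain ⟨i, -, hi, rfl⟩ := hsurj z hz.1
        have h1 : ¬ 3 ≤ i := fun h => hcon i h hi (p1 ▸ hz.2)
        have h2 : i ≠ 1 := by
          rintro rfl
          exact hz.2.ne p1.symm
        have : i = 0 ∨ i = 2 := by omega
        rcases this with rfl | rfl
        · simp [p0]
        · simp [p2]
      rw [hdeg v hv] at this
      omega
    obtain ⟨m, hm3, hmr, hm⟩ := h3
    have hdis : Disjoint ({x, y} : Finset V) ({p 1} ∪ (Finset.Icc 3 r).image p) := by
      rw [Finset.disjoint_left]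
      intro z hz hz'
      simp only [Finset.mem_insert, Finset.mem_singleton, Finset.mem_union, Finset.mem_image,
        Finset.mem_Icc] at hz hz'
      rw [← p0, ← p2] at hz
      rcases hz with rfl | rfl <;> rcases hz' with h | ⟨i, hi, h⟩
      · have := hpe _ _ (by omega) (by omega) h; omega
      · have := hpe _ _ (by omega) (by omega) h; omega
      · have := hpe _ _ (by omega) (by omega) h; omega
      · have := hpe _ _ (by omega) (by omega) h; omega
    have e : ({x, y} : Finset V) ∪ ({p 1} ∪ (Finset.Icc 3 r).image p) = B := by
      ext z
      simp only [Finset.mem_insert, Finset.mem_singleton, Finset.mem_union, Finset.mem_image,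
        Finset.mem_Icc]
      constructor
      · rintro ((rfl | rfl) | rfl | ⟨i, hi, rfl⟩)
        · exact hx
        · exact hy
        · exact hpB _ (by omega)
        · exact hpB _ hi.2
      · intro hz
        obtain ⟨i, -, hi, rfl⟩ := hsurj z hz
        by_cases h : 3 ≤ i
        · exact Or.inr (Or.inr ⟨i, ⟨h, hi⟩, rfl⟩)
        · have : i = 0 ∨ i = 1 ∨ i = 2 := by omega
          rcases this with rfl | rfl | rfl
          · simp [p0]
          · simp
          · simp [p2]
    have hconn : ConnOn G ({p 1} ∪ (Finset.Icc 3 r).image p) :=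
      conn_union G (conn_single G _) (conn_path G p 3 r fun i _ h => hadj i h)
        (Finset.mem_singleton_self _)
        (Finset.mem_image_of_mem p (Finset.mem_Icc.2 ⟨hm3, hmr⟩)) hm
    rw [← e]
    apply extend G hdis (fun _ => a)
    · intro z hz
      simp only [Finset.mem_insert, Finset.mem_singleton] at hz
      rcases hz with rfl | rfl
      · rw [hLc _ hx v hv]; exact ha
      · rw [hLc _ hy v hv]; exact ha
    · intro z hz w hw hzw
      simp only [Finset.mem_insert, Finset.mem_singleton] at hz hw
      rcases hz with rfl | rfl <;> rcases hw with rfl | rfl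
      · exact absurd hzw (G.loopless.irrefl _)
      · exact absurd hzw hnxy
      · exact absurd hzw.symm hnxy
      · exact absurd hzw (G.loopless.irrefl _)
    refine col_of_strict G hconn ?_ (w := p 1) (by simp) ?_
    · intro z hz
      apply card_ext G hdis
      rw [e]; exact hL z (e ▸ Finset.mem_union_right _ hz)
    · have q1 : dgIn G (({x, y} : Finset V) ∪ ({p 1} ∪ (Finset.Icc 3 r).image p)) (p 1) =
          dgIn G {x, y} (p 1) + dgIn G ({p 1} ∪ (Finset.Icc 3 r).image p) (p 1) := by
        unfold dgIn
        rw [Finset.filter_union, Finset.card_union_of_disjoint]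
        exact Finset.disjoint_filter_filter hdis
      have q2 : dgIn G {x, y} (p 1) = 2 := by
        unfold dgIn
        rw [Finset.filter_true_of_mem, Finset.card_pair hxy]
        intro z hz
        simp only [Finset.mem_insert, Finset.mem_singleton] at hz
        rw [p1]
        rcases hz with rfl | rfl
        · exact hxv.symm
        · exact hvy
      rw [e, p1, hdeg v hv, ← p1, q2] at q1
      have q3 := Finset.le_card_sdiff
        ((({x, y} : Finset V).filter (fun w => G.Adj (p 1) w)).image fun _ => a) (L (p 1))
      have q4 : ((({x, y} : Finset V).filter (fun w => G.Adj (p 1) w)).image fun _ => a).card ≤ 1 := by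
        rw [← Finset.card_singleton a]
        apply Finset.card_le_card
        intro b hb
        obtain ⟨_, _, rfl⟩ := Finset.mem_image.1 hb
        simp
      have q5 : (L (p 1)).card = (L v).card := by rw [p1]
      rw [p1] at q1 q3 q4 q5 ⊢
      omega
  -- 2-regular
  have hk : (L v).card = 2 := by omega
  have hnb : ∀ u ∈ B, ∀ s ∈ B, ∀ t ∈ B, s ≠ t → G.Adj u s → G.Adj u t →
      ∀ w ∈ B, G.Adj u w → w = s ∨ w = t := by
    intro u hu s hs t ht hst hus hut w hw huw
    have hsub : ({s, t} : Finset V) ⊆ B.filter (fun w => G.Adj u w) := by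
      intro z hz
      simp only [Finset.mem_insert, Finset.mem_singleton] at hz
      rcases hz with rfl | rfl
      · exact Finset.mem_filter.2 ⟨hs, hus⟩
      · exact Finset.mem_filter.2 ⟨ht, hut⟩
    have := Finset.eq_of_subset_of_card_le hsub (by
      rw [Finset.card_pair hst, ← hk, ← hdeg u hu]; exact le_rfl)
    have hw' : w ∈ B.filter (fun w => G.Adj u w) := Finset.mem_filter.2 ⟨hw, huw⟩
    rw [← this] at hw'
    simpa using hw'
  have hadjiff : ∀ i l, i < l → l ≤ r → (G.Adj (p i) (p l) ↔ l = i + 1 ∨ (i = 0 ∧ l = r)) := by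
    intro i l hil hl
    constructor
    · intro h
      rcases Nat.eq_zero_or_pos i with rfl | hi
      · rcases hnb (p 0) (hpB _ (by omega)) (p 1) (hpB _ (by omega)) (p r) (hpB _ le_rfl)
          (fun e => by have := hpe _ _ (by omega) (by omega) e; omega) (hadj 0 (by omega))
          hjadj.symm (p l) (hpB _ hl) h with e | e
        · have := hpe _ _ (by omega) (by omega) e; omega
        · have := hpe _ _ (by omega) (by omega) e; omega
      · have hprev : G.Adj (p i) (p (i - 1)) := by
          have := hadj (i - 1) (by omega)
          rw [Nat.sub_add_cancel hi] at this
          exact this.symm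
        rcases hnb (p i) (hpB _ (by omega)) (p (i - 1)) (hpB _ (by omega)) (p (i + 1))
          (hpB _ (by omega))
          (fun e => by have := hpe _ _ (by omega) (by omega) e; omega) hprev (hadj i (by omega))
          (p l) (hpB _ hl) h with e | e
        · have := hpe _ _ (by omega) (by omega) e; omega
        · have := hpe _ _ (by omega) (by omega) e; omega
    · rintro (rfl | ⟨rfl, rfl⟩)
      · exact hadj i (by omega)
      · exact hjadj.symm
  have hrodd : ¬ Even r := fun h => hodd ⟨p, r, hr2, h, hinj, hpB,
    fun z hz => by obtain ⟨i, -, h1, h2⟩ := hsurj z hz; exact ⟨i, h1, h2⟩, hadjiff⟩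
  rw [Nat.even_iff] at hrodd
  obtain ⟨a, b, hab, hLab⟩ := Finset.card_eq_two.1 hk
  choose! f hf0 hfr hfp using hsurj
  apply hcol
  refine ⟨fun z => if f z % 2 = 0 then a else b, ?_, ?_⟩
  · intro z hz
    rw [hLc z hz v hv, hLab]
    dsimp only
    split_ifs <;> simp
  · have key : ∀ z ∈ B, ∀ w ∈ B, G.Adj z w → f z < f w → f z % 2 ≠ f w % 2 := by
      intro z hz w hw hzw hlt
      have := (hadjiff (f z) (f w) hlt (hfr w hw)).1 (by rw [hfp z hz, hfp w hw]; exact hzw)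
      omega
    intro z hz w hw hzw
    have hne : f z % 2 ≠ f w % 2 := by
      rcases lt_trichotomy (f z) (f w) with h | h | h
      · exact key z hz w hw hzw h
      · exact absurd (by rw [← hfp z hz, ← hfp w hw, h]) hzw.ne
      · exact (key w hw z hz hzw.symm h).symm
    dsimp only
    split_ifs with h1 h2 h2
    · omega
    · exact hab
    · exact hab.symm
    · omega

lemma conn_of_induce (S : Set V) (T : Finset V) (hT : ∀ x, x ∈ T ↔ x ∈ S)
    (h : (G.induce S).Connected) : ConnOn G T := by
  intro A hA hne hAT
  obtain ⟨u, hu⟩ := hne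
  obtain ⟨v, hv, hvA⟩ : ∃ v ∈ T, v ∉ A := by
    by_contra hcon
    push Not at hcon
    exact hAT (hA.antisymm hcon)
  obtain ⟨w⟩ := h.preconnected ⟨u, (hT u).1 (hA hu)⟩ ⟨v, (hT v).1 hv⟩
  obtain ⟨d, -, h1, h2⟩ := w.exists_boundary_dart {z | z.1 ∈ A} hu hvA
  exact ⟨d.fst.1, h1, d.snd.1, (hT _).2 d.snd.2, h2, d.adj⟩

lemma not_oddCyc (B : Set V) (T : Finset V) (hT : ∀ x, x ∈ T ↔ x ∈ B)
    (h : ¬ ∃ n : ℕ, Odd n ∧ Nonempty (G.induce B ≃g SimpleGraph.cycleGraph n)) :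
    ¬ OddCyc G T := by
  rintro ⟨p, r, hr2, hev, hinj, hpT, hsurj, hadj⟩
  apply h
  refine ⟨r + 1, hev.add_one, ⟨SimpleGraph.Iso.symm ?_⟩⟩
  let f : Fin (r + 1) → B := fun i => ⟨p i, (hT _).1 (hpT i (by omega))⟩
  have hf : Function.Bijective f := by
    constructor
    · intro i l hil
      have : p i = p l := congrArg Subtype.val hil
      exact Fin.ext (hinj ⟨by omega, by omega⟩ ⟨by omega, by omega⟩ this)
    · rintro ⟨z, hz⟩
      obtain ⟨i, hi, e⟩ := hsurj z ((hT z).2 hz)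
      exact ⟨⟨i, by omega⟩, Subtype.ext e⟩
  have key : ∀ i l : Fin (r + 1), i < l →
      (G.Adj (p i) (p l) ↔ (SimpleGraph.cycleGraph (r + 1)).Adj i l) := by
    intro i l hil
    rw [hadj i l hil (by omega), SimpleGraph.cycleGraph_adj']
    have hil' : i.1 < l.1 := hil
    have := l.2
    rw [Fin.sub_val_of_le hil.le, Fin.coe_sub_iff_lt.2 hil]
    omega
  refine ⟨Equiv.ofBijective f hf, ?_⟩
  intro i l
  change G.Adj (p i) (p l) ↔ _
  rcases lt_trichotomy i l with h | h | h
  · exact key i l h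
  · subst h; simp
  · rw [G.adj_comm, SimpleGraph.adj_comm _ i l]; exact key l i h
end aux2

/-- a connected graph having a block that is neither complete nor an odd
cycle is degree-choosable. -/
theorem stmt7 {V : Type*} [Fintype V] [DecidableEq V] (G : SimpleGraph V)
    [DecidableRel G.Adj] (hconn : G.Connected)
    (B : Set V) (hB : IsBlock G B)
    (hnotcomplete : G.induce B ≠ ⊤)
    (hnotoddcycle : ¬ ∃ n : ℕ, Odd n ∧ Nonempty (G.induce B ≃g SimpleGraph.cycleGraph n)) :
    ∀ L : V → Finset ℕ, (∀ v : V, (L v).card = G.degree v) →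
      ∃ c : V → ℕ, (∀ v : V, c v ∈ L v) ∧ ∀ ⦃x y : V⦄, G.Adj x y → c x ≠ c y := by
  intro L hL
  obtain ⟨T, hT⟩ : ∃ T : Finset V, ∀ x, x ∈ T ↔ x ∈ B := ⟨B.toFinite.toFinset, by simp⟩
  obtain ⟨hBc, hB2, -⟩ := hB
  have hTc : ConnOn G T := conn_of_induce G B T hT hBc
  have hT2 : ∀ x ∈ T, ConnOn G (T.erase x) := by
    intro x hx
    have hTx : ∀ z, z ∈ T.erase x ↔ z ∈ B \ {x} := by
      intro z; simp [hT, and_comm]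
    rcases hB2 x ((hT x).1 hx) with h | h
    · exact conn_of_induce G _ _ hTx h
    · intro A hA hne _
      obtain ⟨z, hz⟩ := hne
      have := (hTx z).1 (hA hz)
      rw [h] at this
      exact absurd this (Set.notMem_empty z)
  have hnc : ∃ a ∈ T, ∃ b ∈ T, a ≠ b ∧ ¬ G.Adj a b := by
    by_contra hcon
    push Not at hcon
    apply hnotcomplete
    ext a b
    rw [SimpleGraph.top_adj]
    constructor
    · intro h; exact h.ne
    · intro h
      exact hcon a ((hT _).2 a.2) b ((hT _).2 b.2) fun e => h (Subtype.ext e)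
  have hne : T.Nonempty := by obtain ⟨a, ha, -⟩ := hnc; exact ⟨a, ha⟩
  have hU : ConnOn G (Finset.univ : Finset V) := by
    intro A hA hne hAT
    obtain ⟨u, hu⟩ := hne
    obtain ⟨v, hvA⟩ : ∃ v, v ∉ A := by
      by_contra hcon
      push Not at hcon
      exact hAT (Finset.eq_univ_iff_forall.2 hcon)
    obtain ⟨w⟩ := hconn.preconnected u v
    obtain ⟨d, -, h1, h2⟩ := w.exists_boundary_dart {z | z ∈ A} hu hvA
    exact ⟨d.fst, h1, d.snd, Finset.mem_univ _, h2, d.adj⟩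
  have hLU : ∀ v ∈ (Finset.univ : Finset V), dgIn G Finset.univ v ≤ (L v).card := by
    intro v _
    rw [hL v, ← SimpleGraph.card_neighborFinset_eq_degree]
    apply Finset.card_le_card
    intro w hw
    rw [SimpleGraph.mem_neighborFinset]
    exact (Finset.mem_filter.1 hw).2
  obtain ⟨c, hc, hcp⟩ := col_outside G hU (Finset.subset_univ T) hne hLU
  have hdis : Disjoint (Finset.univ \ T) T := Finset.sdiff_disjoint
  have e : (Finset.univ \ T) ∪ T = Finset.univ := Finset.sdiff_union_of_subset (Finset.subset_univ T)
  have := extend G hdis c hc hcp (main_block G hTc hT2 hnc (not_oddCyc G B T hT hnotoddcycle) _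
    (fun v hv => card_ext G hdis c (by rw [e]; exact hLU v (Finset.mem_univ v))))
  rw [e] at this
  obtain ⟨d, hd, hdp⟩ := this
  exact ⟨d, fun v => hd v (Finset.mem_univ v),
    fun x y h => hdp x (Finset.mem_univ x) y (Finset.mem_univ y) h⟩
end

section
/- Let k ≥ 4 be an integer and let G be a connected k-regular graph that is not 3-connected. Then the set of proper k-colourings of G forms a single Kempe class. -/
open SimpleGraph
open scoped Classical

variable {V : Type*}

namespace KempeAux

/-- `K` is a union of `a`-`b` Kempe chains (up to vertices of other colours). -/
def ChainClosed {k : ℕ} (G : SimpleGraph V) (c : V → Fin k) (a b : Fin k) (K : Set V) : Prop :=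
  ∀ u v, G.Adj u v → u ∈ K → (c u = a ∨ c u = b) → (c v = a ∨ c v = b) → v ∈ K

/-- Swap `a` and `b` on `K`. -/
noncomputable def sw {k : ℕ} (c : V → Fin k) (a b : Fin k) (K : Set V) : V → Fin k :=
  fun v => if v ∈ K then Equiv.swap a b (c v) else c v

def GStep {k : ℕ} (G : SimpleGraph V) (c c' : V → Fin k) : Prop :=
  ∃ a b K, ChainClosed G c a b K ∧ c' = sw c a b K

def GE {k : ℕ} (G : SimpleGraph V) (c c' : V → Fin k) : Prop :=
  Relation.ReflTransGen (GStep G) c c'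

theorem sw_mem_iff {k : ℕ} (c : V → Fin k) (a b : Fin k) (K : Set V) (v : V) :
    (sw c a b K v = a ∨ sw c a b K v = b) ↔ (c v = a ∨ c v = b) := by
  unfold sw
  split_ifs with h
  · simp only [Equiv.swap_apply_def]
    split_ifs <;> grind
  · rfl

theorem sw_sw {k : ℕ} (c : V → Fin k) (a b : Fin k) (K : Set V) :
    sw (sw c a b K) a b K = c := by
  funext v
  unfold sw
  split_ifs <;> simp

theorem GStep.symm {k : ℕ} {G : SimpleGraph V} {c c' : V → Fin k} (h : GStep G c c') :
    GStep G c' c := by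
  obtain ⟨a, b, K, hK, rfl⟩ := h
  refine ⟨a, b, K, ?_, (sw_sw c a b K).symm⟩
  intro u v huv hu h1 h2
  rw [sw_mem_iff] at h1 h2
  exact hK u v huv hu h1 h2

theorem GE.symm {k : ℕ} {G : SimpleGraph V} {c c' : V → Fin k} (h : GE G c c') :
    GE G c' c := by
  induction h with
  | refl => exact Relation.ReflTransGen.refl
  | tail _ h2 ih => exact Relation.ReflTransGen.head h2.symm ih

theorem GE.trans {k : ℕ} {G : SimpleGraph V} {c c' c'' : V → Fin k} (h : GE G c c')
    (h' : GE G c' c'') : GE G c c'' := Relation.ReflTransGen.trans h h'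

theorem GE.mono {k : ℕ} {G H : SimpleGraph V} (hGH : G ≤ H) {c c' : V → Fin k}
    (h : GE H c c') : GE G c c' := by
  induction h with
  | refl => exact Relation.ReflTransGen.refl
  | tail _ h2 ih =>
    obtain ⟨a, b, K, hK, rfl⟩ := h2
    exact Relation.ReflTransGen.tail ih ⟨a, b, K, fun u v huv => hK u v (hGH huv), rfl⟩

theorem GStep.proper {k : ℕ} {G : SimpleGraph V} {c c' : V → Fin k} (h : GStep G c c')
    (hc : IsProperColoring G k c) : IsProperColoring G k c' := by
  obtain ⟨a, b, K, hK, rfl⟩ := h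
  intro u v huv
  have h1 := hc huv
  have h2 := hK u v huv
  have h3 := hK v u huv.symm
  unfold sw
  simp only [Equiv.swap_apply_def]
  split_ifs <;> grind

theorem GE.proper {k : ℕ} {G : SimpleGraph V} {c c' : V → Fin k} (h : GE G c c')
    (hc : IsProperColoring G k c) : IsProperColoring G k c' := by
  induction h with
  | refl => exact hc
  | tail _ h2 ih => exact h2.proper ih

theorem GStep.kempe [Fintype V] {k : ℕ} {G : SimpleGraph V} (n : ℕ) : ∀ {c c' : V → Fin k},
    (Finset.univ.filter (fun v => c v ≠ c' v)).card ≤ n → GStep G c c' → KempeEquiv G k c c' := by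
  induction n with
  | zero =>
    intro c c' hn _
    have : c = c' := by
      funext v
      by_contra hv
      have : v ∈ (Finset.univ.filter (fun v => c v ≠ c' v)) := by simp [hv]
      have := Finset.card_pos.2 ⟨v, this⟩
      omega
    subst this
    exact Relation.ReflTransGen.refl
  | succ n ih =>
    intro c c' hn hs
    by_cases hcc : c = c'
    · subst hcc
      exact Relation.ReflTransGen.refl
    obtain ⟨v0, hv0⟩ := Function.ne_iff.1 hcc
    obtain ⟨a, b, K, hK, rfl⟩ := hs
    have hv0K : v0 ∈ K := by
      by_contra h
      simp [sw, h] at hv0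
    have hv0c : c v0 = a ∨ c v0 = b := by
      by_contra h
      push Not at h
      simp [sw, Equiv.swap_apply_of_ne_of_ne h.1 h.2] at hv0
    set C : Set V := {v | ∃ h : c v = a ∨ c v = b,
      (G.induce {x : V | c x = a ∨ c x = b}).Reachable ⟨v0, hv0c⟩ ⟨v, h⟩} with hC
    have hv0C : v0 ∈ C := ⟨hv0c, Reachable.refl _⟩
    have hCclosed : ChainClosed G c a b C := by
      rintro u v huv ⟨hu, hr⟩ _ hv
      refine ⟨hv, hr.trans (Adj.reachable ?_)⟩
      simpa using huv
    have hCK : C ⊆ K := by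
      rintro v ⟨hv, ⟨p⟩⟩
      have key : ∀ (s t : {x : V | c x = a ∨ c x = b}),
          (G.induce {x : V | c x = a ∨ c x = b}).Walk s t → s.1 ∈ K → t.1 ∈ K := by
        intro s t p
        induction p with
        | nil => exact id
        | @cons x y z hxy _ ih2 =>
          intro hs
          exact ih2 (hK _ _ (by simpa using hxy) hs x.2 y.2)
      exact key _ _ p hv0K
    have hstep : KempeStep G k c (sw c a b C) := by
      refine ⟨a, b, ⟨v0, hv0c⟩, ?_⟩
      intro v
      unfold sw
      by_cases h : c v = a ∨ c v = b
      · by_cases h2 : (G.induce {x : V | c x = a ∨ c x = b}).Reachable ⟨v0, hv0c⟩ ⟨v, h⟩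
        · have : v ∈ C := ⟨h, h2⟩
          rw [if_pos this, dif_pos h, if_pos h2]
        · have : v ∉ C := fun h' => h2 h'.2
          rw [if_neg this, dif_pos h, if_neg h2]
      · have : v ∉ C := fun h' => h h'.1
        rw [if_neg this, dif_neg h]
    have heq : sw c a b K = sw (sw c a b C) a b (K \ C) := by
      funext v
      by_cases h1 : v ∈ C
      · simp [sw, h1, hCK h1]
      · simp [sw, h1]
    have hs2 : GStep G (sw c a b C) (sw c a b K) := by
      refine ⟨a, b, K \ C, ?_, heq⟩
      intro u v huv hu h1 h2
      rw [sw_mem_iff] at h1 h2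
      refine ⟨hK u v huv hu.1 h1 h2, fun hvC => hu.2 (hCclosed v u huv.symm hvC h2 h1)⟩
    refine Relation.ReflTransGen.head hstep (ih ?_ hs2)
    have : (Finset.univ.filter (fun v => sw c a b C v ≠ sw c a b K v)) ⊂
        (Finset.univ.filter (fun v => c v ≠ sw c a b K v)) := by
      rw [Finset.ssubset_iff_of_subset]
      · refine ⟨v0, by simpa using hv0, ?_⟩
        rw [Finset.mem_filter]
        simp [sw, hv0C, hv0K]
      · intro v
        simp only [Finset.mem_filter, Finset.mem_univ, true_and]
        by_cases h1 : v ∈ C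
        · simp [sw, h1, hCK h1]
        · simp [sw, h1]
    have := Finset.card_lt_card this
    omega

theorem GE.kempe [Fintype V] {k : ℕ} {G : SimpleGraph V} {c c' : V → Fin k} (h : GE G c c') :
    KempeEquiv G k c c' := by
  induction h with
  | refl => exact Relation.ReflTransGen.refl
  | tail _ h2 ih => exact Relation.ReflTransGen.trans ih (GStep.kempe _ le_rfl h2)

/-- Spanning version of the subgraph induced on `W`. -/
def rG (G : SimpleGraph V) (W : Set V) : SimpleGraph V where
  Adj u v := G.Adj u v ∧ u ∈ W ∧ v ∈ W
  symm := ⟨fun _ _ h => ⟨h.1.symm, h.2.2, h.2.1⟩⟩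
  loopless := ⟨fun _ h => h.1.ne rfl⟩

theorem rG_le (G : SimpleGraph V) (W : Set V) : rG G W ≤ G := fun _ _ h => h.1

theorem rG_mono (G : SimpleGraph V) {W W' : Set V} (h : W ⊆ W') : rG G W ≤ rG G W' :=
  fun _ _ h' => ⟨h'.1, h h'.2.1, h h'.2.2⟩

/-- `G[W]` is `(k-1)`-degenerate. -/
def Deg (G : SimpleGraph V) (k : ℕ) (W : Finset V) : Prop :=
  ∀ T ⊆ W, T.Nonempty → ∃ v ∈ T, (T.filter (fun u => G.Adj v u)).card < k

theorem IsProperColoring.mono' {k : ℕ} {G H : SimpleGraph V} (h : G ≤ H) {c : V → Fin k}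
    (hc : IsProperColoring H k c) : IsProperColoring G k c := fun _ _ huv => hc (h huv)

theorem recolor {k : ℕ} {G : SimpleGraph V} {c : V → Fin k} (hc : IsProperColoring G k c)
    (v : V) (e : Fin k) (he : ∀ u, G.Adj v u → c u ≠ e) :
    GE G c (Function.update c v e) := by
  refine Relation.ReflTransGen.single ⟨c v, e, {v}, ?_, ?_⟩
  · intro u w huw hu h1 h2
    simp only [Set.mem_singleton_iff] at hu
    subst hu
    have := hc huw
    have := he w huw
    grind
  · funext w
    by_cases h : w = v
    · subst h; simp [sw]
    · simp [sw, h]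

/-- Greedy colouring. -/
theorem exists_coloring {k : ℕ} (hk : 0 < k) (G : SimpleGraph V) (n : ℕ) : ∀ (W : Finset V),
    W.card = n → Deg G k W → ∃ f : V → Fin k, IsProperColoring (rG G W) k f := by
  induction n with
  | zero =>
    intro W hW _
    refine ⟨fun _ => ⟨0, hk⟩, ?_⟩
    rintro u v ⟨_, hu, _⟩
    rw [Finset.card_eq_zero] at hW
    simp [hW] at hu
  | succ n ih =>
    intro W hW hd
    obtain ⟨v, hv, hcard⟩ := hd W subset_rfl (Finset.card_pos.1 (by omega))
    obtain ⟨f, hf⟩ := ih (W.erase v) (by rw [Finset.card_erase_of_mem hv]; omega)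
      (fun T hT => hd T (hT.trans (Finset.erase_subset _ _)))
    have : ∃ e, e ∉ (W.filter (fun u => G.Adj v u)).image f := by
      by_contra hcon
      push Not at hcon
      have h1 : (Finset.univ : Finset (Fin k)) ⊆ (W.filter (fun u => G.Adj v u)).image f :=
        fun e _ => hcon e
      have h2 := Finset.card_le_card h1
      have h3 := Finset.card_image_le (s := W.filter (fun u => G.Adj v u)) (f := f)
      simp only [Finset.card_univ, Fintype.card_fin] at h2
      omega
    obtain ⟨e, he⟩ := this
    simp only [Finset.mem_image, Finset.mem_filter, not_exists, not_and] at he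
    refine ⟨Function.update f v e, ?_⟩
    rintro a b ⟨hab, ha, hb⟩
    have hne := hab.ne
    by_cases hav : a = v
    · subst hav
      simp only [Function.update_self]
      rw [Function.update_of_ne hne.symm]
      exact fun h => he b ⟨hb, hab⟩ h.symm
    · rw [Function.update_of_ne hav]
      by_cases hbv : b = v
      · subst hbv
        simp only [Function.update_self]
        exact fun h => he a ⟨ha, hab.symm⟩ h
      · rw [Function.update_of_ne hbv]
        exact hf ⟨hab, by simpa [hav] using ha, by simpa [hbv] using hb⟩

/-- Extending one Kempe change over a vertex of small degree. -/
theorem extend_step {k : ℕ} (G : SimpleGraph V) (W : Finset V) (v : V) (hv : v ∈ W)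
    (hcard : (W.filter (fun u => G.Adj v u)).card < k) {c d d' : V → Fin k}
    (hc : IsProperColoring (rG G W) k c) (hcd : ∀ u, u ≠ v → c u = d u)
    (hs : GStep (rG G (W.erase v : Finset V)) d d') :
    ∃ c', GE (rG G W) c c' ∧ ∀ u, u ≠ v → c' u = d' u := by
  obtain ⟨a, b, K, hK, rfl⟩ := hs
  by_cases hab : a = b
  · subst hab
    refine ⟨c, Relation.ReflTransGen.refl, fun u hu => ?_⟩
    simp [sw, hcd u hu]
  have hK' : ∀ u w, G.Adj u w → u ∈ W → w ∈ W → u ≠ v → w ≠ v → u ∈ K →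
      (c u = a ∨ c u = b) → (c w = a ∨ c w = b) → w ∈ K := by
    intro u w h1 h2 h3 h4 h5 h6 h7 h8
    rw [hcd u h4] at h7
    rw [hcd w h5] at h8
    exact hK u w ⟨h1, by simpa [h4] using h2, by simpa [h5] using h3⟩ h6 h7 h8
  by_cases hex : ∃ e, e ≠ a ∧ e ≠ b ∧ ∀ u ∈ W, G.Adj v u → c u ≠ e
  · obtain ⟨e, hea, heb, he⟩ := hex
    refine ⟨sw (Function.update c v e) a b (K \ {v}), ?_, ?_⟩
    · refine (recolor hc v e (fun u hu => he u hu.2.2 hu.1)).trans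
        (Relation.ReflTransGen.single ⟨a, b, K \ {v}, ?_, rfl⟩)
      rintro u w ⟨huw, huW, hwW⟩ hu h1 h2
      have huv : u ≠ v := fun h => hu.2 h
      have hwv : w ≠ v := by
        rintro rfl
        simp [hea, heb] at h2
      rw [Function.update_of_ne huv] at h1
      rw [Function.update_of_ne hwv] at h2
      exact ⟨hK' u w huw huW hwW huv hwv hu.1 h1 h2, hwv⟩
    · intro u hu
      simp [sw, hu, hcd u hu]
  · push Not at hex
    have huniq : ∀ u1 ∈ W, ∀ u2 ∈ W, G.Adj v u1 → G.Adj v u2 → (c u1 = a ∨ c u1 = b) →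
        (c u2 = a ∨ c u2 = b) → u1 = u2 := by
      intro u1 hu1 u2 hu2 h1 h2 hc1 hc2
      by_contra hne
      set N := W.filter (fun u => G.Adj v u) with hN
      have hsub : ((Finset.univ : Finset (Fin k)).erase a).erase b ⊆
          ((N.erase u1).erase u2).image c := by
        intro e he
        simp only [Finset.mem_erase, Finset.mem_univ, and_true] at he
        obtain ⟨u, huW, huv, hue⟩ := hex e he.2 he.1
        simp only [Finset.mem_image, Finset.mem_erase, hN, Finset.mem_filter]
        refine ⟨u, ⟨?_, ?_, huW, huv⟩, hue⟩
        · rintro rfl; grind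
        · rintro rfl; grind
      have l1 := Finset.card_le_card hsub
      have l2 := Finset.card_image_le (s := (N.erase u1).erase u2) (f := c)
      rw [Finset.card_erase_of_mem (by simp [Ne.symm hab]),
        Finset.card_erase_of_mem (by simp)] at l1
      have m1 : u1 ∈ N := by simp [hN, hu1, h1]
      have m2 : u2 ∈ N.erase u1 := by simp [hN, hu2, h2, Ne.symm hne]
      rw [Finset.card_erase_of_mem m2, Finset.card_erase_of_mem m1] at l2
      have : 0 < (N.erase u1).card := Finset.card_pos.2 ⟨_, m2⟩
      rw [Finset.card_erase_of_mem m1] at this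
      simp only [Finset.card_univ, Fintype.card_fin] at l1
      omega
    by_cases hin : ∃ u ∈ W, G.Adj v u ∧ (c u = a ∨ c u = b) ∧ u ∈ K
    · obtain ⟨u0, hu0, hvu0, hcu0, hu0K⟩ := hin
      refine ⟨sw c a b (insert v K), Relation.ReflTransGen.single ⟨a, b, _, ?_, rfl⟩, ?_⟩
      · rintro u w ⟨huw, huW, hwW⟩ hu h1 h2
        by_cases hwv : w = v
        · exact Or.inl hwv
        · right
          by_cases huv : u = v
          · subst huv
            rw [huniq w hwW u0 hu0 huw hvu0 h2 hcu0]
            exact hu0K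
          · exact hK' u w huw huW hwW huv hwv (hu.resolve_left huv) h1 h2
      · intro u hu
        simp [sw, hu, hcd u hu]
    · push Not at hin
      refine ⟨sw c a b (K \ {v}), Relation.ReflTransGen.single ⟨a, b, _, ?_, rfl⟩, ?_⟩
      · rintro u w ⟨huw, huW, hwW⟩ hu h1 h2
        have huv : u ≠ v := fun h => hu.2 h
        have hwv : w ≠ v := by
          rintro rfl
          exact hin u huW huw.symm h1 hu.1
        exact ⟨hK' u w huw huW hwW huv hwv hu.1 h1 h2, hwv⟩
      · intro u hu
        simp [sw, hu, hcd u hu]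

theorem extend {k : ℕ} (G : SimpleGraph V) (W : Finset V) (v : V) (hv : v ∈ W)
    (hcard : (W.filter (fun u => G.Adj v u)).card < k) {c d : V → Fin k}
    (hc : IsProperColoring (rG G W) k c)
    (hs : GE (rG G (W.erase v : Finset V)) c d) :
    ∃ c', GE (rG G W) c c' ∧ ∀ u, u ≠ v → c' u = d u := by
  induction hs with
  | refl => exact ⟨c, Relation.ReflTransGen.refl, fun _ _ => rfl⟩
  | tail _ h2 ih =>
    obtain ⟨c1, h1, h3⟩ := ih
    obtain ⟨c2, h4, h5⟩ := extend_step G W v hv hcard (h1.proper hc) h3 h2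
    exact ⟨c2, h1.trans h4, h5⟩

/-- Las Vergnas–Meyniel. -/
theorem lvm {k : ℕ} (G : SimpleGraph V) (n : ℕ) : ∀ (W : Finset V),
    W.card = n → Deg G k W → ∀ c c' : V → Fin k, IsProperColoring (rG G W) k c →
    IsProperColoring (rG G W) k c' → ∃ d, GE (rG G W) c d ∧ ∀ v ∈ W, d v = c' v := by
  induction n with
  | zero =>
    intro W hW _ c c' _ _
    refine ⟨c, Relation.ReflTransGen.refl, ?_⟩
    rw [Finset.card_eq_zero] at hW
    simp [hW]
  | succ n ih =>
    intro W hW hd c c' hc hc'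
    obtain ⟨v, hv, hcard⟩ := hd W subset_rfl (Finset.card_pos.1 (by omega))
    have hle : rG G (W.erase v : Finset V) ≤ rG G W :=
      rG_mono G (by exact_mod_cast Finset.erase_subset _ _)
    obtain ⟨d, hd1, hd2⟩ := ih (W.erase v) (by rw [Finset.card_erase_of_mem hv]; omega)
      (fun T hT => hd T (hT.trans (Finset.erase_subset _ _))) c c' (IsProperColoring.mono' hle hc)
      (IsProperColoring.mono' hle hc')
    obtain ⟨c1, h1, h2⟩ := extend G W v hv hcard hc hd1
    have h3 : ∀ u ∈ W, u ≠ v → c1 u = c' u := fun u hu huv => by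
      rw [h2 u huv, hd2 u (by simp [huv, hu])]
    refine ⟨Function.update c1 v (c' v), h1.trans (recolor (h1.proper hc) v _ ?_), ?_⟩
    · rintro u hu
      rw [h3 u hu.2.2 hu.1.ne.symm]
      exact (hc' hu).symm
    · intro u hu
      by_cases huv : u = v
      · subst huv; simp
      · rw [Function.update_of_ne huv, h3 u hu huv]

/-- A separation of `G` along `{x, y}`. -/
structure Cut (G : SimpleGraph V) (W1 W2 : Finset V) (x y : V) : Prop where
  inter : ∀ v, (v ∈ W1 ∧ v ∈ W2) ↔ (v = x ∨ v = y)
  edge : ∀ u v, G.Adj u v → (u ∈ W1 ∧ v ∈ W1) ∨ (u ∈ W2 ∧ v ∈ W2)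
  cover : ∀ v, v ∈ W1 ∨ v ∈ W2

theorem Cut.swap {G : SimpleGraph V} {W1 W2 : Finset V} {x y : V} (h : Cut G W1 W2 x y) :
    Cut G W2 W1 x y :=
  ⟨fun v => by rw [← h.inter v, and_comm], fun u v huv => (h.edge u v huv).symm,
    fun v => (h.cover v).symm⟩

theorem Cut.x1 {G : SimpleGraph V} {W1 W2 : Finset V} {x y : V} (h : Cut G W1 W2 x y) :
    x ∈ W1 := ((h.inter x).2 (Or.inl rfl)).1

theorem Cut.y1 {G : SimpleGraph V} {W1 W2 : Finset V} {x y : V} (h : Cut G W1 W2 x y) :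
    y ∈ W1 := ((h.inter y).2 (Or.inr rfl)).1

/-- Simulating on `G` a Kempe change of `G[W1]` that respects the cut. -/
theorem sim_step {k : ℕ} {G : SimpleGraph V} {W1 W2 : Finset V} {x y : V}
    (hcut : Cut G W1 W2 x y) {c d : V → Fin k} {a b : Fin k} {K : Set V}
    (hK : ChainClosed (rG G W1) d a b K) (hcd : ∀ v ∈ W1, c v = d v)
    (hresp : (∀ s, (s = x ∨ s = y) → (c s = a ∨ c s = b) → s ∈ K) ∨
      (∀ s, (s = x ∨ s = y) → (c s = a ∨ c s = b) → s ∉ K)) :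
    ∃ c', GE G c c' ∧ (∀ v ∈ W1, c' v = sw d a b K v) ∧
      ∃ π : Equiv.Perm (Fin k), ∀ v ∈ W2, c' v = π (c v) := by
  have hK' : ∀ u w, G.Adj u w → u ∈ W1 → w ∈ W1 → u ∈ K →
      (c u = a ∨ c u = b) → (c w = a ∨ c w = b) → w ∈ K := by
    intro u w h1 h2 h3 h6 h7 h8
    rw [hcd u h2] at h7
    rw [hcd w h3] at h8
    exact hK u w ⟨h1, h2, h3⟩ h6 h7 h8
  rcases hresp with hr | hr
  · refine ⟨sw c a b {v | v ∈ W1 → v ∈ K}, Relation.ReflTransGen.single ⟨a, b, _, ?_, rfl⟩, ?_,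
      Equiv.swap a b, ?_⟩
    · intro u v huv hu h1 h2 hv
      rcases hcut.edge u v huv with ⟨h3, h4⟩ | ⟨h3, h4⟩
      · exact hK' u v huv h3 h4 (hu h3) h1 h2
      · exact hr v ((hcut.inter v).1 ⟨hv, h4⟩) h2
    · intro v hv
      simp [sw, hv, hcd v hv]
    · intro v hv
      by_cases h1 : v ∈ W1 → v ∈ K
      · simp only [sw, Set.mem_ofPred_eq]
        rw [if_pos h1]
      · have h2 := hr v ((hcut.inter v).1 ⟨by tauto, hv⟩)
        have h3 : ¬ (c v = a ∨ c v = b) := fun h => h1 (fun _ => h2 h)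
        push Not at h3
        simp [sw, h1, Equiv.swap_apply_of_ne_of_ne h3.1 h3.2]
  · refine ⟨sw c a b {v | v ∈ W1 ∧ v ∈ K}, Relation.ReflTransGen.single ⟨a, b, _, ?_, rfl⟩, ?_,
      1, ?_⟩
    · intro u v huv hu h1 h2
      rcases hcut.edge u v huv with ⟨h3, h4⟩ | ⟨h3, h4⟩
      · exact ⟨h4, hK' u v huv h3 h4 hu.2 h1 h2⟩
      · exact absurd hu.2 (hr u ((hcut.inter u).1 ⟨hu.1, h3⟩) h1)
    · intro v hv
      simp [sw, hv, hcd v hv]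
    · intro v hv
      by_cases h1 : v ∈ W1 ∧ v ∈ K
      · have h2 := hr v ((hcut.inter v).1 ⟨h1.1, hv⟩)
        have h3 : ¬ (c v = a ∨ c v = b) := fun h => h2 h h1.2
        push Not at h3
        simp [sw, h1, Equiv.swap_apply_of_ne_of_ne h3.1 h3.2]
      · simp [sw, h1]

theorem sim_clique {k : ℕ} {G : SimpleGraph V} {W1 W2 : Finset V} {x y : V}
    (hcut : Cut G W1 W2 x y) (hxy : G.Adj x y) {c d : V → Fin k}
    (h : GE (rG G W1) c d) :
    ∃ c', GE G c c' ∧ (∀ v ∈ W1, c' v = d v) ∧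
      ∃ π : Equiv.Perm (Fin k), ∀ v ∈ W2, c' v = π (c v) := by
  induction h with
  | refl => exact ⟨c, Relation.ReflTransGen.refl, fun _ _ => rfl, 1, fun _ _ => rfl⟩
  | @tail d d' _ h2 ih =>
    obtain ⟨c1, h3, h4, π, h5⟩ := ih
    obtain ⟨a, b, K, hK, rfl⟩ := h2
    have ex := h4 x hcut.x1
    have ey := h4 y hcut.y1
    have hadj : (rG G W1).Adj x y := ⟨hxy, hcut.x1, hcut.y1⟩
    have k1 := hK x y hadj
    have k2 := hK y x hadj.symm
    obtain ⟨c2, h6, h7, π', h8⟩ := sim_step hcut hK h4 (by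
      rw [← ex, ← ey] at k1 k2
      by_cases hx : x ∈ K <;> by_cases hy : y ∈ K <;> by_cases cx : (c1 x = a ∨ c1 x = b) <;>
        by_cases cy : (c1 y = a ∨ c1 y = b) <;> grind)
    exact ⟨c2, h3.trans h6, h7, π' * π, fun v hv => by rw [h8 v hv, h5 v hv]; rfl⟩

/-- Swapping two colours not used on the cut, on one side only. -/
theorem swap_side {k : ℕ} {G : SimpleGraph V} {W1 W2 : Finset V} {x y : V}
    (hcut : Cut G W1 W2 x y) (c : V → Fin k) (a b : Fin k)
    (hs : ∀ s, (s = x ∨ s = y) → c s ≠ a ∧ c s ≠ b) :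
    ∃ c', GE G c c' ∧ (∀ v ∈ W2, c' v = c v) ∧ ∀ v ∈ W1, c' v = Equiv.swap a b (c v) := by
  refine ⟨sw c a b {v | v ∉ W2}, Relation.ReflTransGen.single ⟨a, b, _, ?_, rfl⟩, ?_, ?_⟩
  · intro u v huv hu h1 h2 hv
    rcases hcut.edge u v huv with ⟨h3, h4⟩ | ⟨h3, h4⟩
    · have := hs v ((hcut.inter v).1 ⟨h4, hv⟩)
      grind
    · exact hu h3
  · intro v hv
    simp [sw, hv]
  · intro v hv
    by_cases h : v ∈ W2
    · have := hs v ((hcut.inter v).1 ⟨hv, h⟩)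
      simp [sw, h, Equiv.swap_apply_of_ne_of_ne this.1 this.2]
    · simp [sw, h]

theorem perm_side {k : ℕ} {G : SimpleGraph V} {W1 W2 : Finset V} {x y : V}
    (hcut : Cut G W1 W2 x y) (c : V → Fin k) (n : ℕ) : ∀ (π : Equiv.Perm (Fin k)) (e : V → Fin k),
    π.support.card ≤ n → (∀ v ∈ W2, e v = c v) → (∀ v ∈ W1, e v = π (c v)) → GE G e c := by
  have base : ∀ (π : Equiv.Perm (Fin k)) (e : V → Fin k), π = 1 →
      (∀ v ∈ W2, e v = c v) → (∀ v ∈ W1, e v = π (c v)) → GE G e c := by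
    intro π e h1 h2 h3
    have : e = c := by
      funext v
      rcases hcut.cover v with h | h
      · rw [h3 v h, h1]; rfl
      · exact h2 v h
    rw [this]
    exact Relation.ReflTransGen.refl
  induction n with
  | zero =>
    intro π e hn
    exact base π e (by simpa using hn)
  | succ n ih =>
    intro π e hn h2 h3
    by_cases hπ : π = 1
    · exact base π e hπ h2 h3
    obtain ⟨a, ha⟩ : ∃ a, π a ≠ a := by
      by_contra hcon
      push Not at hcon
      exact hπ (Equiv.ext hcon)
    have hs : ∀ s, (s = x ∨ s = y) → e s ≠ a ∧ e s ≠ π a := by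
      intro s hs
      obtain ⟨s1, s2⟩ := (hcut.inter s).2 hs
      have e1 := h2 s s2
      have e2 := h3 s s1
      constructor
      · intro h
        apply ha
        rw [← h, e1, ← e2, e1]
      · intro h
        rw [e2] at h
        have h' := π.injective h
        exact ha (by rw [← h, ← e2, e1, h'])
    obtain ⟨e', g1, g2, g3⟩ := swap_side hcut e a (π a) hs
    refine g1.trans (ih (Equiv.swap a (π a) * π) e' ?_ (fun v hv => by rw [g2 v hv, h2 v hv])
      (fun v hv => by rw [g3 v hv, h3 v hv]; rfl))
    have := Equiv.Perm.card_support_swap_mul ha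
    omega

/-- Gluing along a clique. -/
theorem glue {k : ℕ} {G : SimpleGraph V} {W1 W2 : Finset V} {x y : V}
    (hcut : Cut G W1 W2 x y) (hxy : G.Adj x y) (hd1 : Deg G k W1) (hd2 : Deg G k W2)
    {c c' : V → Fin k} (hc : IsProperColoring G k c) (hc' : IsProperColoring G k c') :
    GE G c c' := by
  obtain ⟨d, h1, h2⟩ := lvm G _ W1 rfl hd1 c c' (IsProperColoring.mono' (rG_le _ _) hc)
    (IsProperColoring.mono' (rG_le _ _) hc')
  obtain ⟨c1, h3, h4, -⟩ := sim_clique hcut hxy h1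
  obtain ⟨d', h5, h6⟩ := lvm G _ W2 rfl hd2 c1 c'
    (IsProperColoring.mono' (rG_le _ _) (h3.proper hc)) (IsProperColoring.mono' (rG_le _ _) hc')
  obtain ⟨c2, h7, h8, π, h9⟩ := sim_clique hcut.swap hxy h5
  refine (h3.trans h7).trans (perm_side hcut c' _ π c2 le_rfl ?_ ?_)
  · intro v hv; rw [h8 v hv, h6 v hv]
  · intro v hv; rw [h9 v hv, h4 v hv, h2 v hv]

/-- Some chain at `x` or `y` in `G[W]` separates `x` from `y`. -/
def Sep {k : ℕ} (G : SimpleGraph V) (W : Finset V) (x y : V) (c : V → Fin k) (b : Fin k) : Prop :=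
  b ≠ c x ∧ ∃ K, ChainClosed (rG G W) c (c x) b K ∧ x ∈ K ∧ y ∉ K

theorem ChainClosed.compl {k : ℕ} {G : SimpleGraph V} {c : V → Fin k} {a b : Fin k} {K : Set V}
    (h : ChainClosed G c a b K) : ChainClosed G c a b Kᶜ :=
  fun u v huv hu h1 h2 hv => hu (h v u huv.symm hv h2 h1)

theorem ChainClosed.comm {k : ℕ} {G : SimpleGraph V} {c : V → Fin k} {a b : Fin k} {K : Set V}
    (h : ChainClosed G c a b K) : ChainClosed G c b a K :=
  fun u v huv hu h1 h2 => h u v huv hu h1.symm h2.symm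

theorem ChainClosed.congr {k : ℕ} {G : SimpleGraph V} {W : Finset V} {c d : V → Fin k}
    (π : Equiv.Perm (Fin k))
    {a b : Fin k} {K : Set V} (hcd : ∀ v ∈ W, d v = π (c v))
    (h : ChainClosed (rG G W) c a b K) : ChainClosed (rG G W) d (π a) (π b) K := by
  intro u v huv hu h1 h2
  rw [hcd u huv.2.1] at h1
  rw [hcd v huv.2.2] at h2
  simp only [EmbeddingLike.apply_eq_iff_eq] at h1 h2
  exact h u v huv hu h1 h2

theorem Sep.congr {k : ℕ} {G : SimpleGraph V} {W : Finset V} {x y : V} {c d : V → Fin k}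
    {b : Fin k} (π : Equiv.Perm (Fin k)) (hx : x ∈ W) (hcd : ∀ v ∈ W, d v = π (c v))
    (h : Sep G W x y c b) : Sep G W x y d (π b) := by
  obtain ⟨h1, K, hK, h2, h3⟩ := h
  refine ⟨?_, K, ?_, h2, h3⟩
  · rw [hcd x hx]
    simpa using h1
  · rw [hcd x hx]
    exact hK.congr π hcd

theorem reach_sep {k : ℕ} {G : SimpleGraph V} {W1 W2 : Finset V} {x y : V}
    (hcut : Cut G W1 W2 x y) {c d : V → Fin k} (hxy : c x = c y)
    (h : GE (rG G W1) c d) :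
    (∃ c', GE G c c' ∧ c' x ≠ c' y) ∨
    (∃ c', GE G c c' ∧ c' x = c' y ∧ (∃ b, Sep G W1 x y c' b) ∧
      ∃ π : Equiv.Perm (Fin k), ∀ v ∈ W2, c' v = π (c v)) ∨
    (∃ c', GE G c c' ∧ (∀ v ∈ W1, c' v = d v) ∧ c' x = c' y ∧
      ∃ π : Equiv.Perm (Fin k), ∀ v ∈ W2, c' v = π (c v)) := by
  induction h with
  | refl => exact Or.inr (Or.inr
      ⟨c, Relation.ReflTransGen.refl, fun _ _ => rfl, hxy, 1, fun _ _ => rfl⟩)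
  | @tail d d' _ h2 ih =>
    rcases ih with h | h | ⟨c1, h3, h4, heq, π, h5⟩
    · exact Or.inl h
    · exact Or.inr (Or.inl h)
    obtain ⟨a, b, K, hK, rfl⟩ := h2
    have hK1 : ChainClosed (rG G W1) c1 a b K := by
      have := hK.congr (d := c1) 1 (fun v hv => h4 v hv)
      exact this
    by_cases hab : a = b
    · subst hab
      refine Or.inr (Or.inr ⟨c1, h3, ?_, heq, π, h5⟩)
      intro v hv
      simp [sw, h4 v hv]
    by_cases hresp : (∀ s, (s = x ∨ s = y) → (c1 s = a ∨ c1 s = b) → s ∈ K) ∨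
      (∀ s, (s = x ∨ s = y) → (c1 s = a ∨ c1 s = b) → s ∉ K)
    · obtain ⟨c2, h6, h7, π', h8⟩ := sim_step hcut hK h4 hresp
      by_cases hne : c2 x = c2 y
      · exact Or.inr (Or.inr ⟨c2, h3.trans h6, h7, hne, π' * π,
          fun v hv => by rw [h8 v hv, h5 v hv]; rfl⟩)
      · exact Or.inl ⟨c2, h3.trans h6, hne⟩
    · right; left
      refine ⟨c1, h3, heq, ?_, π, h5⟩
      have hcx : c1 x = a ∨ c1 x = b := by
        by_contra hcon
        apply hresp
        left
        rintro s (rfl | rfl) hs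
        · exact absurd hs hcon
        · rw [← heq] at hs; exact absurd hs hcon
      have hcy : c1 y = a ∨ c1 y = b := by rw [← heq]; exact hcx
      obtain ⟨b', hb', hcl⟩ : ∃ b', b' ≠ c1 x ∧ ChainClosed (rG G W1) c1 (c1 x) b' K := by
        rcases hcx with h | h
        · exact ⟨b, by rw [h]; exact Ne.symm hab, by rw [h]; exact hK1⟩
        · exact ⟨a, by rw [h]; exact hab, by rw [h]; exact hK1.comm⟩
      refine ⟨b', hb', ?_⟩
      by_cases hx : x ∈ K
      · by_cases hy : y ∈ K
        · exfalso
          apply hresp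
          left
          rintro s (rfl | rfl) _ <;> assumption
        · exact ⟨K, hcl, hx, hy⟩
      · by_cases hy : y ∈ K
        · exact ⟨Kᶜ, hcl.compl, hx, fun h => h hy⟩
        · exfalso
          apply hresp
          right
          rintro s (rfl | rfl) _ <;> assumption

theorem reach_sep' {k : ℕ} (hk : 0 < k) {G H : SimpleGraph V} {W1 W2 : Finset V} {x y : V}
    (hcut : Cut G W1 W2 x y) (hGH : G ≤ H) (hH : H.Adj x y) (hd : Deg H k W1)
    {c : V → Fin k} (hc : IsProperColoring G k c) (hxy : c x = c y) :
    (∃ c', GE G c c' ∧ c' x ≠ c' y) ∨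
    (∃ c', GE G c c' ∧ c' x = c' y ∧ (∃ b, Sep G W1 x y c' b) ∧
      ∃ π : Equiv.Perm (Fin k), ∀ v ∈ W2, c' v = π (c v)) := by
  obtain ⟨f, hf⟩ := exists_coloring hk H _ W1 rfl hd
  have hdG : Deg G k W1 := by
    intro T hT hne
    obtain ⟨v, hv, hlt⟩ := hd T hT hne
    refine ⟨v, hv, lt_of_le_of_lt (Finset.card_le_card ?_) hlt⟩
    intro u hu
    rw [Finset.mem_filter] at hu ⊢
    exact ⟨hu.1, hGH hu.2⟩
  obtain ⟨d, h1, h2⟩ := lvm G _ W1 rfl hdG c f (IsProperColoring.mono' (rG_le _ _) hc)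
    (fun u v huv => hf ⟨hGH huv.1, huv.2⟩)
  rcases reach_sep hcut hxy h1 with h | h | ⟨c1, -, h4, heq, -⟩
  · exact Or.inl h
  · exact Or.inr h
  · exfalso
    rw [h4 x hcut.x1, h4 y hcut.y1, h2 x hcut.x1, h2 y hcut.y1] at heq
    exact hf ⟨hH, hcut.x1, hcut.y1⟩ heq

theorem reach_ne {k : ℕ} (hk : 0 < k) {G H : SimpleGraph V} {W1 W2 : Finset V} {x y : V}
    (hcut : Cut G W1 W2 x y) (hGH : G ≤ H) (hH : H.Adj x y) (hd1 : Deg H k W1)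
    (hd2 : Deg H k W2)
    {c : V → Fin k} (hc : IsProperColoring G k c) :
    ∃ c', GE G c c' ∧ c' x ≠ c' y := by
  by_cases hxy : c x = c y
  swap
  · exact ⟨c, Relation.ReflTransGen.refl, hxy⟩
  rcases reach_sep' hk hcut hGH hH hd1 hc hxy with h | ⟨c1, h1, hxy1, ⟨b1, hs1⟩, -⟩
  · exact h
  rcases reach_sep' hk hcut.swap hGH hH hd2 (h1.proper hc) hxy1 with
    ⟨c2, h2, h3⟩ | ⟨c2, h2, hxy2, ⟨b2, hs2⟩, π, hπ⟩
  · exact ⟨c2, h1.trans h2, h3⟩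
  have hs1' := hs1.congr π hcut.x1 hπ
  obtain ⟨c3, h3, h4, h5⟩ := swap_side hcut c2 (π b1) b2 (by
    rintro s (rfl | rfl)
    · exact ⟨hs1'.1.symm, hs2.1.symm⟩
    · rw [← hxy2]; exact ⟨hs1'.1.symm, hs2.1.symm⟩)
  have t1 := hs1'.congr (Equiv.swap (π b1) b2) hcut.x1 h5
  rw [Equiv.swap_apply_left] at t1
  have t2 := hs2.congr 1 hcut.swap.x1 h4
  change Sep G W2 x y c3 b2 at t2
  have hxy3 : c3 x = c3 y := by
    rw [h4 x hcut.swap.x1, h4 y hcut.swap.y1, hxy2]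
  obtain ⟨hb, K1, hK1, hx1, hy1⟩ := t1
  obtain ⟨-, K2, hK2, hx2, hy2⟩ := t2
  refine ⟨sw c3 (c3 x) b2 {v | (v ∈ W1 → v ∈ K1) ∧ (v ∈ W2 → v ∈ K2)},
    ((h1.trans h2).trans h3).trans (Relation.ReflTransGen.single ⟨_, _, _, ?_, rfl⟩), ?_⟩
  · intro u v huv hu e1 e2
    rcases hcut.edge u v huv with ⟨h6, h7⟩ | ⟨h6, h7⟩
    · have hv : v ∈ K1 := hK1 u v ⟨huv, h6, h7⟩ (hu.1 h6) e1 e2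
      refine ⟨fun _ => hv, fun h8 => ?_⟩
      rcases (hcut.inter v).1 ⟨h7, h8⟩ with rfl | rfl
      · exact hx2
      · exact absurd hv hy1
    · have hv : v ∈ K2 := hK2 u v ⟨huv, h6, h7⟩ (hu.2 h6) e1 e2
      refine ⟨fun h8 => ?_, fun _ => hv⟩
      rcases (hcut.inter v).1 ⟨h8, h7⟩ with rfl | rfl
      · exact hx1
      · exact absurd hv hy2
  · have m1 : x ∈ {v | (v ∈ W1 → v ∈ K1) ∧ (v ∈ W2 → v ∈ K2)} := ⟨fun _ => hx1, fun _ => hx2⟩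
    have m2 : y ∉ {v | (v ∈ W1 → v ∈ K1) ∧ (v ∈ W2 → v ∈ K2)} := fun h => hy1 (h.1 hcut.y1)
    unfold sw
    rw [if_pos m1, if_neg m2, Equiv.swap_apply_left, ← hxy3]
    exact hb

theorem class_of_cut [Fintype V] {k : ℕ} (hk : 0 < k) {G H : SimpleGraph V} {W1 W2 : Finset V}
    {x y : V} (hcut : Cut G W1 W2 x y) (hne : x ≠ y)
    (hH : ∀ u v, H.Adj u v ↔ G.Adj u v ∨ (u = x ∧ v = y) ∨ (u = y ∧ v = x))
    (hd1 : Deg H k W1) (hd2 : Deg H k W2) : KempeClass G k := by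
  intro c c' hc hc'
  have hGH : G ≤ H := fun u v huv => (hH u v).2 (Or.inl huv)
  have hHxy : H.Adj x y := (hH x y).2 (by simp)
  obtain ⟨d, h1, h2⟩ := reach_ne hk hcut hGH hHxy hd1 hd2 hc
  obtain ⟨d', h1', h2'⟩ := reach_ne hk hcut hGH hHxy hd1 hd2 hc'
  have pr : ∀ e : V → Fin k, IsProperColoring G k e → e x ≠ e y → IsProperColoring H k e := by
    intro e he hexy u v huv
    rcases (hH u v).1 huv with h | ⟨rfl, rfl⟩ | ⟨rfl, rfl⟩
    · exact he h
    · exact hexy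
    · exact hexy.symm
  have hcutH : Cut H W1 W2 x y := by
    refine ⟨hcut.inter, ?_, hcut.cover⟩
    intro u v huv
    rcases (hH u v).1 huv with h | ⟨rfl, rfl⟩ | ⟨rfl, rfl⟩
    · exact hcut.edge u v h
    · exact Or.inl ⟨hcut.x1, hcut.y1⟩
    · exact Or.inl ⟨hcut.y1, hcut.x1⟩
  have h3 : GE H d d' := glue hcutH hHxy hd1 hd2 (pr d (h1.proper hc) h2) (pr d' (h1'.proper hc') h2')
  exact (h1.trans ((h3.mono hGH).trans h1'.symm)).kempe

/-- `G` with the edge `xy` added. -/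
def addE (G : SimpleGraph V) (x y : V) (hne : x ≠ y) : SimpleGraph V where
  Adj u v := G.Adj u v ∨ (u = x ∧ v = y) ∨ (u = y ∧ v = x)
  symm := ⟨fun _ _ h => by
    rcases h with h | h | h
    · exact Or.inl h.symm
    · exact Or.inr (Or.inr h.symm)
    · exact Or.inr (Or.inl h.symm)⟩
  loopless := ⟨fun v h => by
    rcases h with h | h | h
    · exact h.ne rfl
    · exact hne (h.1.symm.trans h.2)
    · exact hne (h.2.symm.trans h.1)⟩

theorem deg_of [Fintype V] {k : ℕ} {G : SimpleGraph V}
    (hreg : ∀ v, (Finset.univ.filter (fun u => G.Adj v u)).card = k) (hconn : G.Connected)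
    {x y : V} (hne : x ≠ y) {W : Finset V} {z : V} (hz : z ∉ W)
    (hcond : G.Adj x y ∨ (W.filter (fun u => G.Adj x u)).card + 2 ≤ k ∨
      (W.filter (fun u => G.Adj y u)).card + 2 ≤ k) : Deg (addE G x y hne) k W := by
  intro T hT hTne
  by_contra hcon
  push Not at hcon
  by_cases hbad : x ∈ T ∧ y ∈ T ∧ ¬ G.Adj x y
  · obtain ⟨hx, hy, hxy⟩ := hbad
    have s1 : T.filter (fun u => (addE G x y hne).Adj x u) ⊆
        insert y (W.filter (fun u => G.Adj x u)) := by
      intro u hu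
      rw [Finset.mem_filter] at hu
      rw [Finset.mem_insert, Finset.mem_filter]
      rcases hu.2 with h | h | h
      · exact Or.inr ⟨hT hu.1, h⟩
      · exact Or.inl h.2
      · exact absurd h.1 hne
    have s2 : T.filter (fun u => (addE G x y hne).Adj y u) ⊆
        insert x (W.filter (fun u => G.Adj y u)) := by
      intro u hu
      rw [Finset.mem_filter] at hu
      rw [Finset.mem_insert, Finset.mem_filter]
      rcases hu.2 with h | h | h
      · exact Or.inr ⟨hT hu.1, h⟩
      · exact absurd h.1.symm hne
      · exact Or.inl h.2
    have t1 := (Finset.card_le_card s1).trans (Finset.card_insert_le _ _)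
    have t2 := (Finset.card_le_card s2).trans (Finset.card_insert_le _ _)
    have t3 := hcon x hx
    have t4 := hcon y hy
    rcases hcond with h | h | h
    · exact hxy h
    · omega
    · omega
  · have hclosed : ∀ u ∈ T, ∀ v, G.Adj u v → v ∈ T := by
      intro u hu v huv
      have s1 : T.filter (fun w => (addE G x y hne).Adj u w) ⊆
          Finset.univ.filter (fun w => G.Adj u w) := by
        intro w hw
        rw [Finset.mem_filter] at hw ⊢
        refine ⟨Finset.mem_univ _, ?_⟩
        rcases hw.2 with h | ⟨h1, h2⟩ | ⟨h1, h2⟩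
        · exact h
        · subst h1 h2
          by_contra hn
          exact hbad ⟨hu, hw.1, hn⟩
        · subst h1 h2
          by_contra hn
          exact hbad ⟨hw.1, hu, fun h => hn h.symm⟩
      have s2 := Finset.eq_of_subset_of_card_le s1 (by rw [hreg u]; exact hcon u hu)
      have : v ∈ Finset.univ.filter (fun w => G.Adj u w) := by simp [huv]
      rw [← s2, Finset.mem_filter] at this
      exact this.1
    obtain ⟨t, ht⟩ := hTne
    obtain ⟨p⟩ := hconn.preconnected t z
    have key : ∀ s t, G.Walk s t → s ∈ T → t ∈ T := by
      intro s t p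
      induction p with
      | nil => exact id
      | cons h _ ih => exact fun hs => ih (hclosed _ hs _ h)
    exact hz (hT (key _ _ p ht))

theorem class_of_cond [Fintype V] {k : ℕ} (hk : 4 ≤ k) {G : SimpleGraph V}
    (hreg : ∀ v, (Finset.univ.filter (fun u => G.Adj v u)).card = k) (hconn : G.Connected)
    {W1 W2 : Finset V} {x y : V} (hcut : Cut G W1 W2 x y) (hne : x ≠ y)
    {z1 z2 : V} (hz1 : z1 ∉ W1) (hz2 : z2 ∉ W2)
    (hcond1 : G.Adj x y ∨ (W1.filter (fun u => G.Adj x u)).card + 2 ≤ k ∨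
      (W1.filter (fun u => G.Adj y u)).card + 2 ≤ k)
    (hcond2 : G.Adj x y ∨ (W2.filter (fun u => G.Adj x u)).card + 2 ≤ k ∨
      (W2.filter (fun u => G.Adj y u)).card + 2 ≤ k) : KempeClass G k :=
  class_of_cut (by omega) hcut hne (H := addE G x y hne) (fun _ _ => Iff.rfl)
    (deg_of hreg hconn hne hz1 hcond1) (deg_of hreg hconn hne hz2 hcond2)

theorem class_of_bad [Fintype V] {k : ℕ} (hk : 4 ≤ k) {G : SimpleGraph V}
    (hreg : ∀ v, (Finset.univ.filter (fun u => G.Adj v u)).card = k) (hconn : G.Connected)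
    {W1 W2 : Finset V} {x y : V} (hcut : Cut G W1 W2 x y) (hne : x ≠ y)
    {z1 : V} (hz1 : z1 ∉ W1)
    (hx : k < (W1.filter (fun u => G.Adj x u)).card + 2)
    (hy : k < (W1.filter (fun u => G.Adj y u)).card + 2) : KempeClass G k := by
  have hout : ∀ v, (W1.filter (fun u => G.Adj v u)).card +
      ((Finset.univ \ W1).filter (fun u => G.Adj v u)).card = k := by
    intro v
    rw [← hreg v, ← Finset.card_union_of_disjoint, ← Finset.filter_union,
      Finset.union_sdiff_of_subset (Finset.subset_univ _)]
    · exact Finset.disjoint_filter_filter Finset.disjoint_sdiff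
  have hox := hout x
  have hoy := hout y
  obtain ⟨x', hx', hux⟩ : ∃ x', x' ∉ W1 ∧ ∀ u, G.Adj x u → u ∉ W1 → u = x' := by
    by_cases h : ∃ u, G.Adj x u ∧ u ∉ W1
    · obtain ⟨u, h1, h2⟩ := h
      refine ⟨u, h2, fun w h3 h4 => ?_⟩
      have : ((Finset.univ \ W1).filter (fun u => G.Adj x u)).card ≤ 1 := by omega
      exact Finset.card_le_one.1 this w (by simp [h3, h4]) u (by simp [h1, h2])
    · push Not at h
      exact ⟨z1, hz1, fun u h1 h2 => absurd (h u h1) h2⟩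
  have hxW1 := hcut.x1
  have hyW1 := hcut.y1
  have hxx' : x' ≠ x := fun h => hx' (h ▸ hxW1)
  have hyx' : x' ≠ y := fun h => hx' (h ▸ hyW1)
  have hx'W2 : x' ∈ W2 := (hcut.cover x').resolve_left hx'
  have hx'nb : ∀ u, G.Adj x' u → u ∈ W2 := fun u hu =>
    ((hcut.edge x' u hu).resolve_left (fun h => hx' h.1)).2
  have hcut' : Cut G (insert x' W1) (W2.erase x) x' y := by
    refine ⟨?_, ?_, ?_⟩
    · intro v
      have := hcut.inter v
      simp only [Finset.mem_insert, Finset.mem_erase]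
      have := (hcut.inter y)
      grind
    · intro u v huv
      have h1 := hcut.edge u v huv
      have h2 := hux v
      have h3 := hux u
      have h4 := huv.symm
      simp only [Finset.mem_insert, Finset.mem_erase]
      by_cases hu : u = x
      · subst hu; grind
      · by_cases hv : v = x
        · subst hv; grind
        · grind
    · intro v
      have := hcut.cover v
      simp only [Finset.mem_insert, Finset.mem_erase]
      grind
  obtain ⟨w, hw1, hw2, hw3⟩ : ∃ w, G.Adj x' w ∧ w ≠ x ∧ w ≠ y := by
    by_contra hcon
    push Not at hcon
    have : Finset.univ.filter (fun u => G.Adj x' u) ⊆ {x, y} := by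
      intro u hu
      simp only [Finset.mem_filter, Finset.mem_univ, true_and] at hu
      have := hcon u hu
      simp only [Finset.mem_insert, Finset.mem_singleton]
      tauto
    have := (Finset.card_le_card this).trans Finset.card_le_two
    rw [hreg] at this
    omega
  have hwW1 : w ∉ W1 := fun h => by
    rcases (hcut.inter w).1 ⟨h, hx'nb w hw1⟩ with h | h
    · exact hw2 h
    · exact hw3 h
  refine class_of_cond hk hreg hconn hcut' hyx' (z1 := w) (z2 := x) ?_ (by simp) ?_ ?_
  · simp only [Finset.mem_insert, not_or]
    exact ⟨hw1.ne.symm, hwW1⟩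
  · right; left
    have : (insert x' W1).filter (fun u => G.Adj x' u) ⊆ {x, y} := by
      intro u hu
      rw [Finset.mem_filter] at hu
      have h1 : u ∈ W1 := (Finset.mem_insert.1 hu.1).resolve_left hu.2.ne.symm
      have := (hcut.inter u).1 ⟨h1, hx'nb u hu.2⟩
      simpa using this
    have := (Finset.card_le_card this).trans Finset.card_le_two
    omega
  · right; right
    have : (W2.erase x).filter (fun u => G.Adj y u) ⊆
        (Finset.univ \ W1).filter (fun u => G.Adj y u) := by
      intro u hu
      simp only [Finset.mem_filter, Finset.mem_erase] at hu
      simp only [Finset.mem_filter, Finset.mem_sdiff, Finset.mem_univ, true_and]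
      refine ⟨fun h => ?_, hu.2⟩
      rcases (hcut.inter u).1 ⟨h, hu.1.2⟩ with h | h
      · exact hu.1.1 h
      · exact hu.2.ne h.symm
    have := Finset.card_le_card this
    omega

theorem class_of_anycut [Fintype V] {k : ℕ} (hk : 4 ≤ k) {G : SimpleGraph V}
    (hreg : ∀ v, (Finset.univ.filter (fun u => G.Adj v u)).card = k) (hconn : G.Connected)
    {W1 W2 : Finset V} {x y : V} (hcut : Cut G W1 W2 x y) (hne : x ≠ y)
    {z1 z2 : V} (hz1 : z1 ∉ W1) (hz2 : z2 ∉ W2) : KempeClass G k := by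
  by_cases h1 : k < (W1.filter (fun u => G.Adj x u)).card + 2 ∧
      k < (W1.filter (fun u => G.Adj y u)).card + 2
  · exact class_of_bad hk hreg hconn hcut hne hz1 h1.1 h1.2
  by_cases h2 : k < (W2.filter (fun u => G.Adj x u)).card + 2 ∧
      k < (W2.filter (fun u => G.Adj y u)).card + 2
  · exact class_of_bad hk hreg hconn hcut.swap hne hz2 h2.1 h2.2
  exact class_of_cond hk hreg hconn hcut hne hz1 hz2 (by right; omega) (by right; omega)

theorem class_of_sep [Fintype V] {k : ℕ} (hk : 4 ≤ k) {G : SimpleGraph V}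
    (hreg : ∀ v, (Finset.univ.filter (fun u => G.Adj v u)).card = k) (hconn : G.Connected)
    (S A : Finset V) (hS : S.card ≤ 2) (hSA : Disjoint S A) {u v : V} (hu : u ∈ A) (hv : v ∉ A)
    (hvS : v ∉ S) (hA : ∀ a ∈ A, ∀ w, G.Adj a w → w ∈ A ∨ w ∈ S) : KempeClass G k := by
  have hcard : 5 ≤ (S ∪ A).card := by
    have : insert u (Finset.univ.filter (fun w => G.Adj u w)) ⊆ S ∪ A := by
      intro w hw
      rw [Finset.mem_insert, Finset.mem_filter] at hw
      rw [Finset.mem_union]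
      rcases hw with rfl | hw
      · exact Or.inr hu
      · exact (hA u hu w hw.2).symm
    have := Finset.card_le_card this
    rw [Finset.card_insert_of_notMem (by simp), hreg] at this
    omega
  obtain ⟨S', h1, h2, h3⟩ := Finset.exists_subsuperset_card_eq
    (Finset.subset_union_left (s₁ := S) (s₂ := A)) hS (by omega : 2 ≤ (S ∪ A).card)
  obtain ⟨x, y, hne, rfl⟩ := Finset.card_eq_two.1 h3
  obtain ⟨z, hz1, hz2⟩ : ∃ z ∈ S ∪ A, z ∉ ({x, y} : Finset V) :=
    Finset.exists_mem_notMem_of_card_lt_card (by omega)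
  refine class_of_anycut hk hreg hconn (W1 := S ∪ A)
    (W2 := Finset.univ \ ((S ∪ A) \ {x, y})) (x := x) (y := y) ⟨?_, ?_, ?_⟩ hne (z1 := v) (z2 := z)
    (by simp [hv, hvS]) (by simpa using ⟨by simpa using hz1, by simpa using hz2⟩)
  · intro w
    have hw : w ∈ ({x, y} : Finset V) ↔ (w = x ∨ w = y) := by simp
    rw [← hw, Finset.mem_sdiff, Finset.mem_sdiff]
    have := @h2 w
    have := Finset.mem_univ w
    tauto
  · intro p q hpq
    have key : ∀ p q, G.Adj p q → p ∈ (S ∪ A) \ {x, y} → p ∈ S ∪ A ∧ q ∈ S ∪ A := by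
      intro p q hpq hp
      rw [Finset.mem_sdiff] at hp
      have hpA : p ∈ A :=
        (Finset.mem_union.1 hp.1).resolve_left (fun h => hp.2 (h1 h))
      exact ⟨hp.1, Finset.mem_union.2 (hA p hpA q hpq).symm⟩
    by_cases hp : p ∈ (S ∪ A) \ {x, y}
    · exact Or.inl (key p q hpq hp)
    · by_cases hq : q ∈ (S ∪ A) \ {x, y}
      · exact Or.inl (key q p hpq.symm hq).symm
      · exact Or.inr ⟨Finset.mem_sdiff.2 ⟨Finset.mem_univ _, hp⟩,
          Finset.mem_sdiff.2 ⟨Finset.mem_univ _, hq⟩⟩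
  · intro w
    have := Finset.mem_univ w
    simp only [Finset.mem_sdiff]
    tauto

end KempeAux

/-- for `k ≥ 4`, a connected `k`-regular graph that is not 3-connected
has all its proper `k`-colourings in a single Kempe class. -/
theorem stmt8 {V : Type*} [Fintype V] (k : ℕ) (hk : 4 ≤ k) (G : SimpleGraph V)
    [DecidableRel G.Adj] (hreg : G.IsRegularOfDegree k) (hconn : G.Connected)
    (hn3c : ¬ ThreeConnected G) : KempeClass G k := by 
  have hreg' : ∀ v, (Finset.univ.filter (fun u => G.Adj v u)).card = k := by
    intro v
    rw [← hreg v, ← G.card_neighborFinset_eq_degree]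
    congr 1
    ext u
    simp
  have hcardV : 3 < Fintype.card V := by
    obtain ⟨v⟩ := hconn.nonempty
    have h1 := Finset.card_le_univ (Finset.univ.filter (fun u => G.Adj v u))
    rw [hreg' v] at h1
    omega
  unfold ThreeConnected at hn3c
  push Not at hn3c
  obtain ⟨S, hS, hdis⟩ := hn3c hcardV
  rw [Set.ncard_eq_toFinset_card'] at hS
  have hnpre : ¬ (G.induce Sᶜ).Preconnected := by
    intro hpre
    apply hdis
    have hne : ∃ v, v ∉ S.toFinset := by
      by_contra hcon
      push Not at hcon
      have h2 : S.toFinset = Finset.univ := Finset.eq_univ_of_forall hcon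
      rw [h2, Finset.card_univ] at hS
      omega
    obtain ⟨v, hv⟩ := hne
    have : Nonempty (Sᶜ : Set V) := ⟨⟨v, by simpa using hv⟩⟩
    exact ⟨hpre⟩
  unfold SimpleGraph.Preconnected at hnpre
  push Not at hnpre
  obtain ⟨u, v, huv⟩ := hnpre
  refine KempeAux.class_of_sep hk (fun v => by convert hreg' v) hconn S.toFinset
    (Finset.univ.filter (fun w => ∃ h : w ∈ Sᶜ, (G.induce Sᶜ).Reachable u ⟨w, h⟩)) hS ?_
    (u := u.1) (v := v.1) ?_ ?_ ?_ ?_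
  · rw [Finset.disjoint_left]
    intro w hw hw2
    rw [Finset.mem_filter] at hw2
    obtain ⟨-, h, -⟩ := hw2
    exact h (by simpa using hw)
  · rw [Finset.mem_filter]
    exact ⟨Finset.mem_univ _, u.2, Reachable.refl _⟩
  · rw [Finset.mem_filter]
    rintro ⟨-, h, hr⟩
    exact huv hr
  · have : v.1 ∉ S := v.2
    simpa only [Set.mem_toFinset] using this
  · intro a ha w haw
    rw [Finset.mem_filter] at ha ⊢
    obtain ⟨-, h, hr⟩ := ha
    by_cases hw : w ∈ S
    · right; simpa using hw
    · left
      refine ⟨Finset.mem_univ _, hw, hr.trans (Adj.reachable ?_)⟩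
      simpa using haw
end

section
/- Let k ≥ 4 be an integer and let G be a k-regular 3-connected graph having a vertex cut S of size 3 such that some connected component of G−S is a clique on k vertices. Then the set of proper k-colourings of G forms a single Kempe class. -/
open SimpleGraph
open scoped Classical

variable {V : Type*}

/-- Swap of the colours `a`, `b` on a set `K` closed in the `a`/`b` subgraph of `H[T]`;
values outside `T` are irrelevant. -/
def StepOn {V : Type*} (H : SimpleGraph V) (k : ℕ) (T : Set V) (c c' : V → Fin k) : Prop :=
  ∃ a b : Fin k, ∃ K : Set V,
    (∀ x ∈ T, ∀ y ∈ T, H.Adj x y → x ∈ K → (c x = a ∨ c x = b) → (c y = a ∨ c y = b) → y ∈ K) ∧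
    ∀ x ∈ T, c' x = if x ∈ K then Equiv.swap a b (c x) else c x

/-- The swap of `a`, `b` on `K`. -/
noncomputable def swapOn {V : Type*} {k : ℕ} (a b : Fin k) (K : Set V) (c : V → Fin k) :
    V → Fin k := fun x => if x ∈ K then Equiv.swap a b (c x) else c x

theorem third_eq {k : ℕ} {a b x y z : Fin k} (hx : x = a ∨ x = b) (hy : y = a ∨ y = b)
    (hz : z = a ∨ z = b) (hxy : x ≠ y) (hxz : x ≠ z) : y = z := by
  rcases hx with rfl | rfl <;> rcases hy with rfl | rfl <;> rcases hz with rfl | rfl <;>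
    first | rfl | exact absurd rfl hxy | exact absurd rfl hxz

def ProperOn {V : Type*} (H : SimpleGraph V) (k : ℕ) (T : Set V) (c : V → Fin k) : Prop :=
  ∀ x ∈ T, ∀ y ∈ T, H.Adj x y → c x ≠ c y

theorem swap_mem_iff {k : ℕ} (a b x : Fin k) :
    (Equiv.swap a b x = a ∨ Equiv.swap a b x = b) ↔ (x = a ∨ x = b) := by
  rw [Equiv.swap_apply_def]; split_ifs <;> simp_all

theorem swap_of_not {k : ℕ} {a b x : Fin k} (h : ¬ (x = a ∨ x = b)) :
    Equiv.swap a b x = x := by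
  rw [not_or] at h
  exact Equiv.swap_apply_of_ne_of_ne h.1 h.2

theorem ProperOn.step {V : Type*} {H : SimpleGraph V} {k : ℕ} {T : Set V} {c c' : V → Fin k}
    (hc : ProperOn H k T c) (h : StepOn H k T c c') : ProperOn H k T c' := by
  obtain ⟨a, b, K, hK, hd⟩ := h
  have key : ∀ x ∈ T, ∀ y ∈ T, H.Adj x y → x ∈ K → y ∉ K → Equiv.swap a b (c x) ≠ c y := by
    intro x hx y hy hxy hxK hyK he
    by_cases h1 : c x = a ∨ c x = b
    · apply hyK
      apply hK x hx y hy hxy hxK h1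
      rw [← he]; exact (swap_mem_iff a b _).2 h1
    · rw [swap_of_not h1] at he
      exact hc x hx y hy hxy he
  intro x hx y hy hxy
  rw [hd x hx, hd y hy]
  by_cases h1 : x ∈ K <;> by_cases h2 : y ∈ K <;> simp only [h1, h2, if_true, if_false]
  · intro he
    exact hc x hx y hy hxy ((Equiv.swap a b).injective he)
  · exact key x hx y hy hxy h1 h2
  · exact (key y hy x hx hxy.symm h2 h1).symm
  · exact hc x hx y hy hxy

theorem ProperOn.steps {V : Type*} {H : SimpleGraph V} {k : ℕ} {T : Set V} {c c' : V → Fin k}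
    (hc : ProperOn H k T c) (h : Relation.ReflTransGen (StepOn H k T) c c') :
    ProperOn H k T c' := by
  induction h with
  | refl => exact hc
  | tail _ h ih => exact ih.step h

theorem stepOn_symm {V : Type*} {H : SimpleGraph V} {k : ℕ} {T : Set V} {c c' : V → Fin k}
    (h : StepOn H k T c c') : StepOn H k T c' c := by
  obtain ⟨a, b, K, hK, hd⟩ := h
  have e : ∀ x ∈ T, (c' x = a ∨ c' x = b) ↔ (c x = a ∨ c x = b) := by
    intro x hx
    rw [hd x hx]
    split_ifs
    · exact swap_mem_iff a b _
    · rfl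
  refine ⟨a, b, K, ?_, ?_⟩
  · intro x hx y hy hxy hxK h1 h2
    exact hK x hx y hy hxy hxK ((e x hx).1 h1) ((e y hy).1 h2)
  · intro x hx
    rw [hd x hx]
    split_ifs <;> simp

theorem steps_symm {V : Type*} {H : SimpleGraph V} {k : ℕ} {T : Set V} {c c' : V → Fin k}
    (h : Relation.ReflTransGen (StepOn H k T) c c') :
    Relation.ReflTransGen (StepOn H k T) c' c := by
  induction h with
  | refl => exact .refl
  | tail _ h ih => exact .head (stepOn_symm h) ih

/-- Closed-set swaps are products of Kempe changes. -/
theorem stepOn_kempe {V : Type*} [Fintype V] {H : SimpleGraph V} {k : ℕ} (a b : Fin k) :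
    ∀ (n : ℕ) (K : Set V) (c c' : V → Fin k), (K ∩ {x | c x = a ∨ c x = b}).ncard = n →
    (∀ x y, H.Adj x y → x ∈ K → (c x = a ∨ c x = b) → (c y = a ∨ c y = b) → y ∈ K) →
    (∀ x, c' x = if x ∈ K then Equiv.swap a b (c x) else c x) → KempeEquiv H k c c' := by
  intro n
  induction n using Nat.strong_induction_on with
  | _ n ih =>
  intro K c c' hn hK hd
  by_cases hne : (K ∩ {x | c x = a ∨ c x = b}).Nonempty
  · obtain ⟨v, hvK, hv⟩ := hne
    let v0 : {x : V | c x = a ∨ c x = b} := ⟨v, hv⟩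
    let R : Set V := {x | ∃ h : c x = a ∨ c x = b,
      (H.induce {x : V | c x = a ∨ c x = b}).Reachable v0 ⟨x, h⟩}
    have hRK : R ⊆ K := by
      rintro x ⟨hx, hr⟩
      have hr' := (SimpleGraph.reachable_iff_reflTransGen _ _).1 hr
      have : ∀ z : {x : V | c x = a ∨ c x = b}, Relation.ReflTransGen
          (H.induce {x : V | c x = a ∨ c x = b}).Adj v0 z → z.1 ∈ K := by
        intro z hz
        induction hz with
        | refl => exact hvK
        | @tail p q _ h ih => exact hK p.1 q.1 h ih p.2 q.2
      exact this _ hr'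
    have hRcl : ∀ x y, H.Adj x y → x ∈ R → (c y = a ∨ c y = b) → y ∈ R := by
      rintro x y hxy ⟨hx, hr⟩ hy
      refine ⟨hy, hr.trans (SimpleGraph.Adj.reachable ?_)⟩
      exact hxy
    have hRab : ∀ x ∈ R, (c x = a ∨ c x = b) := fun x h => h.1
    let c1 : V → Fin k := fun x => if x ∈ R then Equiv.swap a b (c x) else c x
    have hstep : KempeStep H k c c1 := by
      refine ⟨a, b, v0, ?_⟩
      intro x
      by_cases hx : c x = a ∨ c x = b
      · by_cases hr : (H.induce {x : V | c x = a ∨ c x = b}).Reachable v0 ⟨x, hx⟩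
        · have : x ∈ R := ⟨hx, hr⟩
          simp only [c1, dif_pos hx, if_pos hr, if_pos this]
        · have : x ∉ R := fun h => hr h.2
          simp only [c1, dif_pos hx, if_neg hr, if_neg this]
      · have : x ∉ R := fun h => hx h.1
        simp only [c1, dif_neg hx, if_neg this]
    have e : ∀ x, (c1 x = a ∨ c1 x = b) ↔ (c x = a ∨ c x = b) := by
      intro x
      simp only [c1]
      split_ifs
      · exact swap_mem_iff a b _
      · rfl
    refine Relation.ReflTransGen.head hstep ?_
    refine ih _ ?_ (K \ R) c1 c' rfl ?_ ?_
    · rw [← hn]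
      apply Set.ncard_lt_ncard _ (Set.toFinite _)
      refine ⟨?_, ?_⟩
      · rintro x ⟨hx1, hx2⟩
        exact ⟨hx1.1, (e x).1 hx2⟩
      · intro hsub
        exact (hsub ⟨hvK, hv⟩).1.2 ⟨hv, SimpleGraph.Reachable.refl _⟩
    · intro x y hxy hx h1 h2
      refine ⟨hK x y hxy hx.1 ((e x).1 h1) ((e y).1 h2), ?_⟩
      intro hy
      exact hx.2 (hRcl y x hxy.symm hy ((e x).1 h1))
    · intro x
      rw [hd x]
      by_cases hxR : x ∈ R
      · have := hRK hxR
        simp [c1, hxR, this]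
      · by_cases hxK : x ∈ K <;> simp [c1, hxR, hxK]
  · have : c' = c := by
      funext x
      rw [hd x]
      split_ifs with hx
      · apply swap_of_not
        intro h
        exact hne ⟨x, hx, h⟩
      · rfl
    rw [this]
    exact .refl

theorem steps_kempe {V : Type*} [Fintype V] {H : SimpleGraph V} {k : ℕ} {c c' : V → Fin k}
    (h : Relation.ReflTransGen (StepOn H k Set.univ) c c') : KempeEquiv H k c c' := by
  induction h with
  | refl => exact .refl
  | tail _ h ih =>
    obtain ⟨a, b, K, hK, hd⟩ := h
    exact ih.trans (stepOn_kempe a b _ K _ _ rfl (fun x y => hK x trivial y trivial)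
      (fun x => hd x trivial))

/-- Case where the new vertex does not use the two colours. -/
theorem lift_easy {V : Type*} {H : SimpleGraph V} {k : ℕ} {T : Set V} {v : V}
    (hv : v ∉ T) {c c' : V → Fin k} (a b : Fin k) (K : Set V)
    (hK : ∀ x ∈ T, ∀ y ∈ T, H.Adj x y → x ∈ K → (c x = a ∨ c x = b) → (c y = a ∨ c y = b) → y ∈ K)
    (hc' : ProperOn H k (insert v T) c') (hcc : ∀ x ∈ T, c' x = c x)
    (hn : ∀ y ∈ T, H.Adj v y → (c' v = a ∨ c' v = b) → (c' y = a ∨ c' y = b) → y ∉ K) :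
    StepOn H k (insert v T) c'
      (swapOn a b (K \ {v}) c') := by
  refine ⟨a, b, K \ {v}, ?_, fun x _ => rfl⟩
  rintro x hx y hy hxy ⟨hxK, hxv⟩ h1 h2
  have hxT : x ∈ T := by
    rcases hx with h | h
    · exact absurd h hxv
    · exact h
  rcases hy with rfl | hyT
  · exact absurd hxK (hn x hxT hxy.symm h2 h1)
  · refine ⟨hK x hxT y hyT hxy hxK (hcc x hxT ▸ h1) (hcc y hyT ▸ h2), ?_⟩
    rintro rfl
    exact hv hyT

theorem lift_step {V : Type*} [Fintype V] {H : SimpleGraph V} {k : ℕ} {T : Set V} {v : V}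
    (hv : v ∉ T) (hdeg : (T ∩ H.neighborSet v).ncard < k) {c d c' : V → Fin k}
    (h : StepOn H k T c d) (hc' : ProperOn H k (insert v T) c') (hcc : ∀ x ∈ T, c' x = c x) :
    ∃ d', (∀ x ∈ T, d' x = d x) ∧ Relation.ReflTransGen (StepOn H k (insert v T)) c' d' := by
  obtain ⟨a, b, K, hK, hd⟩ := h
  have hne : ∀ x ∈ T, x ≠ v := by rintro x hx rfl; exact hv hx
  -- easy finish
  have fin_easy : ∀ c'' : V → Fin k, ProperOn H k (insert v T) c'' → (∀ x ∈ T, c'' x = c x) →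
      (∀ y ∈ T, H.Adj v y → (c'' v = a ∨ c'' v = b) → (c'' y = a ∨ c'' y = b) → y ∉ K) →
      ∃ d', (∀ x ∈ T, d' x = d x) ∧ Relation.ReflTransGen (StepOn H k (insert v T)) c'' d' := by
    intro c'' h1 h2 h3
    refine ⟨_, ?_, .single (lift_easy hv a b K hK h1 h2 h3)⟩
    intro x hx
    have := hne x hx
    simp [swapOn, hd x hx, h2 x hx, this]
  by_cases hA : ∀ y ∈ T, H.Adj v y → (c' v = a ∨ c' v = b) → (c' y = a ∨ c' y = b) → y ∉ K
  · exact fin_easy c' hc' hcc hA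
  push Not at hA
  obtain ⟨y1, hy1, hvy1, hvab, hy1ab, hy1K⟩ := hA
  by_cases hB : ∀ y ∈ T, H.Adj v y → (c' y = a ∨ c' y = b) → y ∈ K
  · refine ⟨swapOn a b (insert v K) c', ?_, .single
      ⟨a, b, insert v K, ?_, fun x _ => rfl⟩⟩
    · intro x hx
      have := hne x hx
      simp [swapOn, hd x hx, hcc x hx, this]
    · intro x hx y hy hxy hxK h1 h2
      rcases hy with rfl | hyT
      · exact Or.inl rfl
      right
      rcases hx with rfl | hxT
      · exact hB y hyT hxy h2
      · rcases hxK with rfl | hxK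
        · exact absurd hxT hv
        · exact hK x hxT y hyT hxy hxK (hcc x hxT ▸ h1) (hcc y hyT ▸ h2)
  push Not at hB
  obtain ⟨y2, hy2, hvy2, hy2ab, hy2K⟩ := hB
  have hv1 := hc' v (Or.inl rfl) y1 (Or.inr hy1) hvy1
  have hv2 := hc' v (Or.inl rfl) y2 (Or.inr hy2) hvy2
  have h12 : c' y1 = c' y2 := by
    exact third_eq hvab hy1ab hy2ab hv1 hv2
  have hyne : y1 ≠ y2 := by rintro rfl; exact hy2K hy1K
  -- free colour
  obtain ⟨f, hf⟩ : ∃ f : Fin k, f ∉ insert (c' v) (c' '' ((T ∩ H.neighborSet v) \ {y2})) := by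
    by_contra hcon
    push Not at hcon
    have hu : insert (c' v) (c' '' ((T ∩ H.neighborSet v) \ {y2})) = Set.univ :=
      Set.eq_univ_of_forall hcon
    have h1 := Set.ncard_insert_le (c' v) (c' '' ((T ∩ H.neighborSet v) \ {y2}))
    rw [hu, Set.ncard_univ, Nat.card_eq_fintype_card, Fintype.card_fin] at h1
    have h2 : (c' '' ((T ∩ H.neighborSet v) \ {y2})).ncard ≤ _ :=
      Set.ncard_image_le (Set.toFinite _)
    have h3 := Set.ncard_sdiff_singleton_add_one (s := T ∩ H.neighborSet v) (a := y2) ⟨hy2, hvy2⟩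
      (Set.toFinite _)
    omega
  have hfv : f ≠ c' v := fun h => hf (Or.inl h)
  have hfy : ∀ y ∈ T, H.Adj v y → c' y ≠ f := by
    intro y hy hvy he
    by_cases hyy : y = y2
    · subst hyy
      exact hf (Or.inr ⟨y1, ⟨⟨hy1, hvy1⟩, hyne⟩, h12.trans he⟩)
    · exact hf (Or.inr ⟨y, ⟨⟨hy, hvy⟩, hyy⟩, he⟩)
  have hs : StepOn H k (insert v T) c' (Function.update c' v f) := by
    refine ⟨c' v, f, {v}, ?_, ?_⟩
    · rintro x hx y hy hxy rfl - h2
      rcases hy with rfl | hyT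
      · rfl
      · rcases h2 with h2 | h2
        · exact absurd h2.symm (hc' x (Or.inl rfl) y (Or.inr hyT) hxy)
        · exact absurd h2 (hfy y hyT hxy)
    · intro x hx
      by_cases hxv : x = v
      · subst hxv; simp
      · simp [hxv]
  obtain ⟨d', hd1, hd2⟩ := fin_easy (Function.update c' v f) (hc'.step hs)
    (by intro x hx; simp [hne x hx, hcc x hx])
    (by
      intro y hy hvy h1 h2
      exfalso
      simp only [Function.update_self] at h1
      have := hfy y1 hy1 hvy1
      exact this (third_eq hvab hy1ab h1 hv1 hfv.symm))
  exact ⟨d', hd1, .head hs hd2⟩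

theorem insert_class {V : Type*} [Fintype V] {H : SimpleGraph V} {k : ℕ} {T : Set V} {v : V}
    (hv : v ∉ T) (hdeg : (T ∩ H.neighborSet v).ncard < k)
    (hT : ∀ c c', ProperOn H k T c → ProperOn H k T c' →
      Relation.ReflTransGen (StepOn H k T) c c')
    (c c' : V → Fin k) (hc : ProperOn H k (insert v T) c) (hc' : ProperOn H k (insert v T) c') :
    Relation.ReflTransGen (StepOn H k (insert v T)) c c' := by
  have hsub : ∀ {c : V → Fin k}, ProperOn H k (insert v T) c → ProperOn H k T c :=
    fun h x hx y hy => h x (Or.inr hx) y (Or.inr hy)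
  have hch := hT c c' (hsub hc) (hsub hc')
  have : ∃ d', (∀ x ∈ T, d' x = c' x) ∧ Relation.ReflTransGen (StepOn H k (insert v T)) c d' := by
    clear hc'
    induction hch with
    | refl => exact ⟨c, fun _ _ => rfl, .refl⟩
    | tail _ h ih =>
      obtain ⟨d, h1, h2⟩ := ih
      obtain ⟨d', h3, h4⟩ := lift_step hv hdeg h (hc.steps h2) h1
      exact ⟨d', h3, h2.trans h4⟩
  obtain ⟨d, h1, h2⟩ := this
  refine h2.tail ?_
  have hd := hc.steps h2
  refine ⟨d v, c' v, {v}, ?_, ?_⟩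
  · rintro x hx y hy hxy rfl - h4
    rcases hy with rfl | hyT
    · rfl
    · exfalso
      rcases h4 with h4 | h4
      · exact hd x (Or.inl rfl) y (Or.inr hyT) hxy h4.symm
      · rw [h1 y hyT] at h4
        exact hc' x (Or.inl rfl) y (Or.inr hyT) hxy h4.symm
  · intro x hx
    by_cases hxv : x = v
    · subst hxv; simp
    · rcases hx with h | h
      · exact absurd h hxv
      · simp [hxv, h1 x h]

theorem degenerate_class {V : Type*} [Fintype V] {H : SimpleGraph V} {k : ℕ}
    (hdeg : ∀ T : Set V, T.Nonempty → ∃ v ∈ T, (T ∩ H.neighborSet v).ncard < k) :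
    ∀ (n : ℕ) (T : Set V), T.ncard = n → ∀ c c', ProperOn H k T c → ProperOn H k T c' →
      Relation.ReflTransGen (StepOn H k T) c c' := by
  intro n
  induction n with
  | zero =>
    intro T hT c c' _ _
    rw [Set.ncard_eq_zero (Set.toFinite _)] at hT
    subst hT
    by_cases hk : Nonempty (Fin k)
    · obtain ⟨a⟩ := hk
      exact .single ⟨a, a, ∅, by simp, by simp⟩
    · have : c = c' := by
        funext x
        exact absurd ⟨c x⟩ hk
      rw [this]
  | succ n ih =>
    intro T hT
    obtain ⟨v, hv, hd⟩ := hdeg T (by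
      apply Set.nonempty_of_ncard_ne_zero; omega)
    have hins : insert v (T \ {v}) = T := Set.insert_sdiff_self_of_mem hv
    have hcard := Set.ncard_sdiff_singleton_add_one hv (Set.toFinite _)
    have := insert_class (H := H) (k := k) (T := T \ {v}) (v := v) (by simp)
      (lt_of_le_of_lt (Set.ncard_le_ncard
        (Set.inter_subset_inter_left _ Set.sdiff_subset) (Set.toFinite _)) hd)
      (ih (T \ {v}) (by omega))
    rw [hins] at this
    exact this

/-- Crossing edge in a connected induced subgraph. -/
theorem exists_cross {V : Type*} {G : SimpleGraph V} {W : Set V} (hW : (G.induce W).Connected)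
    {T : Set V} {p q : V} (hp : p ∈ W) (hq : q ∈ W) (hpT : p ∈ T) (hqT : q ∉ T) :
    ∃ x ∈ W, ∃ y ∈ W, x ∈ T ∧ y ∉ T ∧ G.Adj x y := by
  by_contra hcon
  push Not at hcon
  have hr := (SimpleGraph.reachable_iff_reflTransGen _ _).1 (hW.preconnected ⟨p, hp⟩ ⟨q, hq⟩)
  have : ∀ z : W, Relation.ReflTransGen (G.induce W).Adj ⟨p, hp⟩ z → z.1 ∈ T := by
    intro z hz
    induction hz with
    | refl => exact hpT
    | @tail r s _ h ih =>
      by_contra hs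
      exact hcon r.1 r.2 s.1 s.2 ih hs h
  exact hqT (this _ hr)

/-- Colourings with `c u = c v` are all equivalent, `u`, `v` non-adjacent with a common
neighbour `w`. -/
theorem same_class {V : Type*} [Fintype V] {G : SimpleGraph V} {k : ℕ}
    (hk : 0 < k) (hreg : ∀ x, (G.neighborSet x).ncard = k) {u v w : V} (huv : u ≠ v)
    (hconn : (G.induce ({u, v} : Set V)ᶜ).Connected)
    (hwu : G.Adj w u) (hwv : G.Adj w v) {c c' : V → Fin k}
    (hc : ProperOn G k Set.univ c) (hc' : ProperOn G k Set.univ c')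
    (h1 : c u = c v) (h2 : c' u = c' v) :
    Relation.ReflTransGen (StepOn G k Set.univ) c c' := by
  let π : V → V := fun x => if x = v then u else x
  have hπv : π v = u := by simp [π]
  have hπ : ∀ x, x ≠ v → π x = x := fun x hx => by simp [π, hx]
  let H : SimpleGraph V :=
    { Adj := fun p q => p ≠ q ∧ ∃ x y, π x = p ∧ π y = q ∧ G.Adj x y
      symm := ⟨by
        rintro p q ⟨hne, x, y, hx, hy, h⟩
        exact ⟨hne.symm, y, x, hy, hx, h.symm⟩⟩
      loopless := ⟨fun p h => h.1 rfl⟩ }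
  have hlift : ∀ c : V → Fin k, c u = c v → c ∘ π = c := by
    intro c h
    funext x
    by_cases hx : x = v
    · subst hx; simp [hπv, h]
    · simp [hπ x hx]
  have hprop : ∀ c : V → Fin k, c u = c v → ProperOn G k Set.univ c →
      ProperOn H k Set.univ c := by
    rintro c h hc p - q - ⟨-, x, y, rfl, rfl, hxy⟩
    have := hlift c h
    have e1 : c (π x) = c x := congrFun this x
    have e2 : c (π y) = c y := congrFun this y
    rw [e1, e2]
    exact hc x trivial y trivial hxy
  have hπne : ∀ x, π x ≠ v := by
    intro x
    by_cases hx : x = v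
    · rw [hx, hπv]; exact huv
    · rwa [hπ x hx]
  have hsmall : ∀ (T : Set V) (x y : V), x ≠ u → x ≠ v → G.Adj x y →
      (T ∩ H.neighborSet x ⊆ π '' (G.neighborSet x \ {y})) →
      (T ∩ H.neighborSet x).ncard < k := by
    intro T x y hxu hxv hxy hsub
    have a1 := Set.ncard_le_ncard hsub (Set.toFinite _)
    have a2 : (π '' (G.neighborSet x \ {y})).ncard ≤ _ := Set.ncard_image_le (Set.toFinite _)
    have a3 := Set.ncard_sdiff_singleton_add_one (s := G.neighborSet x) (a := y) hxy
      (Set.toFinite _)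
    have := hreg x
    omega
  have hpre : ∀ x z, x ≠ u → π z = x → z = x := by
    intro x z hxu hz
    by_cases hzv : z = v
    · rw [hzv, hπv] at hz; exact absurd hz.symm hxu
    · rwa [hπ z hzv] at hz
  have hdeg : ∀ T : Set V, T.Nonempty → ∃ x ∈ T, (T ∩ H.neighborSet x).ncard < k := by
    intro T hT
    by_cases hvT : v ∈ T
    · refine ⟨v, hvT, ?_⟩
      have : T ∩ H.neighborSet v = ∅ := by
        ext p
        simp only [Set.mem_inter_iff, SimpleGraph.mem_neighborSet, Set.mem_empty_iff_false,
          iff_false, not_and]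
        rintro - ⟨-, x, y, hx, -⟩
        exact hπne x hx
      rw [this]; simpa using hk
    by_cases hwT : w ∈ T
    · refine ⟨w, hwT, hsmall T w v hwu.ne hwv.ne hwv ?_⟩
      rintro p ⟨-, -, x, y, hx, rfl, hxy⟩
      have := hpre w x hwu.ne hx
      subst this
      by_cases hyv : y = v
      · subst hyv
        exact ⟨u, ⟨hwu, huv⟩, by rw [hπv, hπ u huv]⟩
      · exact ⟨y, ⟨hxy, hyv⟩, rfl⟩
    by_cases hT' : ∃ p ∈ T, p ≠ u
    · obtain ⟨p, hpT, hpu⟩ := hT'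
      have hpv : p ≠ v := by rintro rfl; exact hvT hpT
      obtain ⟨x, hx, y, hy, hxT, hyT, hxy⟩ := exists_cross hconn (T := T) (p := p) (q := w)
        (by simp [hpu, hpv]) (by simp [hwu.ne, hwv.ne]) hpT hwT
      simp only [Set.mem_compl_iff, Set.mem_insert_iff, Set.mem_singleton_iff, not_or] at hx hy
      refine ⟨x, hxT, hsmall T x y hx.1 hx.2 hxy ?_⟩
      rintro p ⟨hp, -, x', z, hx', rfl, hxz⟩
      have := hpre x x' hx.1 hx'
      subst this
      refine ⟨z, ⟨hxz, ?_⟩, rfl⟩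
      rintro rfl
      rw [hπ z hy.2] at hp
      exact hyT hp
    · push Not at hT'
      obtain ⟨p, hp⟩ := hT
      refine ⟨p, hp, ?_⟩
      have : T ∩ H.neighborSet p = ∅ := by
        ext q
        simp only [Set.mem_inter_iff, SimpleGraph.mem_neighborSet, Set.mem_empty_iff_false,
          iff_false, not_and]
        intro hq hpq
        rw [hT' p hp, hT' q hq] at hpq
        exact hpq.ne rfl
      rw [this]; simpa using hk
  have hH := degenerate_class hdeg _ Set.univ rfl c c' (hprop c h1 hc) (hprop c' h2 hc')
  have := Relation.ReflTransGen.lift (r := StepOn H k Set.univ) (p := StepOn G k Set.univ)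
    (fun d : V → Fin k => d ∘ π) (by
    rintro d d' ⟨a, b, K, hK, hd⟩
    refine ⟨a, b, π ⁻¹' K, ?_, ?_⟩
    · intro x _ y _ hxy hx e1 e2
      by_cases he : π x = π y
      · change π y ∈ K
        rw [← he]; exact hx
      · exact hK (π x) trivial (π y) trivial ⟨he, x, y, rfl, rfl, hxy⟩ hx e1 e2
    · intro x _
      exact hd (π x) trivial) c c' hH
  simpa only [Function.onFun, hlift c h1, hlift c' h2] using this

/-- for `k ≥ 4`, a `k`-regular 3-connected graph with a vertex cut `S`
of size 3 such that some connected component of `G - S` is a clique on `k` vertices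
has all its proper `k`-colourings in a single Kempe class. -/
theorem stmt9 {V : Type*} [Fintype V] (k : ℕ) (hk : 4 ≤ k) (G : SimpleGraph V)
    [DecidableRel G.Adj] (hreg : G.IsRegularOfDegree k) (h3c : ThreeConnected G)
    (S : Set V) (hScard : S.ncard = 3) (hcut : ¬ (G.induce Sᶜ).Connected)
    (C : Set V) (hCS : C ⊆ Sᶜ) (hCconn : (G.induce C).Connected)
    (hCcomp : ∀ x ∈ C, ∀ y ∈ Sᶜ, y ∉ C → ¬ G.Adj x y)
    (hCcard : C.ncard = k) (hCclique : ∀ x ∈ C, ∀ y ∈ C, x ≠ y → G.Adj x y) :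
    KempeClass G k := by
  have hreg' : ∀ x, (G.neighborSet x).ncard = k := by
    intro x
    rw [← hreg x, ← SimpleGraph.card_neighborSet_eq_degree, ← Nat.card_eq_fintype_card]
    rfl
  -- the unique outside neighbour
  have hout : ∀ y, ∃ t, y ∈ C → t ∈ S ∧ G.Adj y t ∧ ∀ n, G.Adj y n → n ∉ C → n = t := by
    intro y
    by_cases hy : y ∈ C
    · have e : G.neighborSet y ∩ C = C \ {y} := by
        ext z
        constructor
        · rintro ⟨h1, h2⟩
          exact ⟨h2, fun h => h1.ne h.symm⟩
        · rintro ⟨h1, h2⟩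
          exact ⟨hCclique y hy z h1 (fun h => h2 h.symm), h1⟩
      have h1 := Set.ncard_inter_add_ncard_sdiff_eq_ncard (G.neighborSet y) C (Set.toFinite _)
      have h2 := Set.ncard_sdiff_singleton_add_one hy (Set.toFinite _)
      rw [e, hreg' y] at h1
      have h3 : (G.neighborSet y \ C).ncard = 1 := by omega
      obtain ⟨t, ht⟩ := Set.ncard_eq_one.1 h3
      have htm : t ∈ G.neighborSet y \ C := by rw [ht]; rfl
      refine ⟨t, fun _ => ⟨?_, htm.1, ?_⟩⟩
      · by_contra hS
        exact hCcomp y hy t hS htm.2 htm.1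
      · intro n hn hnC
        have : n ∈ G.neighborSet y \ C := ⟨hn, hnC⟩
        rw [ht] at this
        exact this
    · exact ⟨y, fun h => absurd h hy⟩
  choose t ht using hout
  have htS : ∀ y ∈ C, t y ∈ S := fun y hy => (ht y hy).1
  have htA : ∀ y ∈ C, G.Adj y (t y) := fun y hy => (ht y hy).2.1
  have htU : ∀ y ∈ C, ∀ n, G.Adj y n → n ∉ C → n = t y := fun y hy => (ht y hy).2.2
  have hSC : ∀ s ∈ S, s ∉ C := fun s hs hsC => hCS hsC hs
  have hCne : C.Nonempty := Set.nonempty_of_ncard_ne_zero (by omega)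
  have hsurj : ∀ s ∈ S, ∃ y ∈ C, t y = s := by
    intro s hs
    have h2 := Set.ncard_sdiff_singleton_add_one hs (Set.toFinite _)
    obtain ⟨y0, hy0⟩ := hCne
    obtain ⟨x, hx, y, hy, hxC, hyC, hxy⟩ := exists_cross (h3c.2 (S \ {s}) (by omega))
      (T := C) (p := y0) (q := s) (fun h => hCS hy0 h.1) (fun h => h.2 rfl) hy0 (hSC s hs)
    have e := htU x hxC y hxy hyC
    have hyS := htS x hxC
    rw [← e] at hyS
    refine ⟨x, hxC, ?_⟩
    rw [← e]
    by_contra hne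
    exact hy ⟨hyS, hne⟩
  -- colour facts
  have hinj : ∀ c : V → Fin k, ProperOn G k Set.univ c → Set.InjOn c C := by
    intro c hc x hx y hy he
    by_contra hne
    exact hc x trivial y trivial (hCclique x hx y hy hne) he
  have hcol : ∀ c : V → Fin k, ProperOn G k Set.univ c → ∀ f : Fin k, ∃ y ∈ C, c y = f := by
    intro c hc f
    have h1 := Set.InjOn.ncard_image (hinj c hc)
    have : c '' C = Set.univ := by
      apply Set.eq_of_subset_of_ncard_le (Set.subset_univ _)
      rw [h1, hCcard, Set.ncard_univ, Nat.card_eq_fintype_card, Fintype.card_fin]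
    have hf : f ∈ c '' C := by rw [this]; trivial
    exact hf
  -- F0: swaps inside the clique
  have F0 : ∀ c : V → Fin k, ProperOn G k Set.univ c → ∀ y ∈ C, ∀ z ∈ C, c y ≠ c (t z) →
      c z ≠ c (t y) → ∃ d, StepOn G k Set.univ c d ∧ d y = c z ∧ d z = c y ∧
        ∀ s ∈ S, d s = c s := by
    intro c hc y hy z hz h1 h2
    refine ⟨swapOn (c y) (c z) {y, z} c,
      ⟨c y, c z, {y, z}, ?_, fun _ _ => rfl⟩, by simp [swapOn], by simp [swapOn], ?_⟩
    · intro x _ n _ hxn hx _ hn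
      have hxC : x ∈ C := by rcases hx with rfl | rfl <;> assumption
      by_cases hnC : n ∈ C
      · rcases hn with hn | hn
        · left; exact hinj c hc hnC hy hn
        · right; exact hinj c hc hnC hz hn
      · exfalso
        have e := htU x hxC n hxn hnC
        subst e
        have hp := hc x trivial (t x) trivial hxn
        rcases hx with rfl | rfl
        · rcases hn with hn | hn
          · exact hp hn.symm
          · exact h2 hn.symm
        · rcases hn with hn | hn
          · exact h1 hn.symm
          · exact hp hn.symm
    · intro s hs
      have : s ∉ ({y, z} : Set V) := by
        rintro (rfl | rfl)
        · exact hSC _ hs hy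
        · exact hSC _ hs hz
      simp only [swapOn, this, if_false]
  -- F1
  have F1 : ∀ c c' : V → Fin k, ProperOn G k Set.univ c → ProperOn G k Set.univ c' →
      ∀ s ∈ S, ∀ y ∈ C, ∀ y' ∈ C, t y = t y' → c s = c y → c' s = c' y' →
      Relation.ReflTransGen (StepOn G k Set.univ) c c' := by
    intro c c' hc hc' s hs y hy y' hy' htt h1 h2
    have hpy := hc' y trivial _ trivial (htA y hy)
    have hpy' := hc' y' trivial _ trivial (htA y' hy')
    obtain ⟨d, hd1, hd2, hd3, hd4⟩ := F0 c' hc' y hy y' hy' (by rwa [← htt]) (by rwa [htt])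
    have hd := hc'.step hd1
    refine Relation.ReflTransGen.tail ?_ (stepOn_symm hd1)
    have hsy : s ≠ y := by rintro rfl; exact hSC _ hs hy
    obtain ⟨w, hw, hws⟩ := hsurj s hs
    have hwy : w ≠ y := by
      rintro rfl
      apply hc w trivial _ trivial (htA w hy)
      rw [hws, h1]
    refine same_class (by omega) hreg' hsy (h3c.2 {s, y} ?_) (w := w) ?_ ?_ hc hd h1 ?_
    · exact (Set.ncard_pair hsy).le
    · rw [← hws]; exact htA w hw
    · exact hCclique w hw y hy hwy
    · rw [hd4 s hs, h2, hd2]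
  -- reaching lemma
  have L : ∀ c : V → Fin k, ProperOn G k Set.univ c → ∀ i ∈ S, ∀ j ∈ S, ∀ l ∈ S,
      (∀ s ∈ S, s = i ∨ s = j ∨ s = l) →
      ((∃ y ∈ C, ∃ z ∈ C, y ≠ z ∧ t y = j ∧ t z = j) ∨ c l = c j) → c i ≠ c j →
      ∃ d, ∃ y ∈ C, t y = j ∧ d i = d y ∧ Relation.ReflTransGen (StepOn G k Set.univ) c d := by
    intro c hc i hi j hj l hl hall hor hij
    obtain ⟨w, hw, hwi⟩ := hcol c hc (c i)
    have hpw := hc w trivial _ trivial (htA w hw)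
    rcases hall (t w) (htS w hw) with h | h | h
    · rw [h] at hpw; exact absurd hwi hpw
    · exact ⟨c, w, hw, h, hwi.symm, .refl⟩
    · obtain ⟨z, hz, hzj, hzl⟩ : ∃ z ∈ C, t z = j ∧ c z ≠ c l := by
        rcases hor with ⟨y, hy, z, hz, hyz, h1, h2⟩ | hor
        · by_cases hyl : c y = c l
          · refine ⟨z, hz, h2, ?_⟩
            intro hzl
            exact hyz (hinj c hc hy hz (hyl.trans hzl.symm))
          · exact ⟨y, hy, h1, hyl⟩
        · obtain ⟨z, hz, hzj⟩ := hsurj j hj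
          refine ⟨z, hz, hzj, ?_⟩
          have := hc z trivial _ trivial (htA z hz)
          rwa [hor, ← hzj]
      obtain ⟨d, hd1, hd2, hd3, hd4⟩ := F0 c hc w hw z hz (by rw [hzj, hwi]; exact hij)
        (by rw [h]; exact hzl)
      exact ⟨d, z, hz, hzj, by rw [hd4 i hi, hd3, hwi], .single hd1⟩
  -- combine
  have M : ∀ c c' : V → Fin k, ProperOn G k Set.univ c → ProperOn G k Set.univ c' →
      ∀ i ∈ S, ∀ j ∈ S, ∀ l ∈ S, (∀ s ∈ S, s = i ∨ s = j ∨ s = l) →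
      (∃ d, ∃ y ∈ C, t y = j ∧ d i = d y ∧ Relation.ReflTransGen (StepOn G k Set.univ) c d) →
      (∃ d, ∃ y ∈ C, t y = j ∧ d i = d y ∧ Relation.ReflTransGen (StepOn G k Set.univ) c' d) →
      Relation.ReflTransGen (StepOn G k Set.univ) c c' := by
    rintro c c' hc hc' i hi j hj l hl - ⟨d, y, hy, hty, hd, hcd⟩ ⟨d', y', hy', hty', hd', hcd'⟩
    exact hcd.trans ((F1 d d' (hc.steps hcd) (hc'.steps hcd') i hi y hy y' hy'
      (hty.trans hty'.symm) hd hd').trans (steps_symm hcd'))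
  -- a vertex of S with two clique neighbours
  obtain ⟨y, hy, z, hz, hyz, htyz⟩ := Set.exists_ne_map_eq_of_ncard_lt_of_maps_to
    (s := C) (t := S) (by omega) (f := t) (fun y hy => htS y hy) (Set.toFinite _)
  obtain ⟨a, ha⟩ : ∃ a, a = t y := ⟨_, rfl⟩
  have haS : a ∈ S := ha ▸ htS y hy
  have htwo : ∃ y ∈ C, ∃ z ∈ C, y ≠ z ∧ t y = a ∧ t z = a :=
    ⟨y, hy, z, hz, hyz, ha.symm, by rw [ha, htyz]⟩
  have h2 := Set.ncard_sdiff_singleton_add_one haS (Set.toFinite _)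
  obtain ⟨b, d, hbd, hSbd⟩ := Set.ncard_eq_two.1 (show (S \ {a}).ncard = 2 by omega)
  have hbS : b ∈ S := by
    have : b ∈ S \ {a} := by rw [hSbd]; simp
    exact this.1
  have hdS : d ∈ S := by
    have : d ∈ S \ {a} := by rw [hSbd]; simp
    exact this.1
  have hall : ∀ s ∈ S, s = a ∨ s = b ∨ s = d := by
    intro s hs
    by_cases hsa : s = a
    · exact Or.inl hsa
    · have : s ∈ S \ {a} := ⟨hs, hsa⟩
      rw [hSbd] at this
      exact Or.inr this
  have hbad : ∀ s ∈ S, s = b ∨ s = a ∨ s = d := fun s hs => by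
    rcases hall s hs with h | h | h <;> simp [h]
  have hdab : ∀ s ∈ S, s = d ∨ s = a ∨ s = b := fun s hs => by
    rcases hall s hs with h | h | h <;> simp [h]
  have hbda : ∀ s ∈ S, s = b ∨ s = d ∨ s = a := fun s hs => by
    rcases hall s hs with h | h | h <;> simp [h]
  have hdba : ∀ s ∈ S, s = d ∨ s = b ∨ s = a := fun s hs => by
    rcases hall s hs with h | h | h <;> simp [h]
  have hmono : ∀ c : V → Fin k, ProperOn G k Set.univ c → c b = c a → c d ≠ c a := by
    intro c hc h1 h2
    obtain ⟨w, hw, hwi⟩ := hcol c hc (c a)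
    have hpw := hc w trivial _ trivial (htA w hw)
    rw [hwi] at hpw
    rcases hall (t w) (htS w hw) with h | h | h <;> rw [h] at hpw
    · exact hpw rfl
    · exact hpw h1.symm
    · exact hpw h2.symm
  -- the mixed case
  have mixed : ∀ c c' : V → Fin k, ProperOn G k Set.univ c → ProperOn G k Set.univ c' →
      c b = c a → c' d = c' a → Relation.ReflTransGen (StepOn G k Set.univ) c c' := by
    intro c c' hc hc' h1 h2
    have h3 := hmono c hc h1
    have h4 : c' b ≠ c' a := fun h => hmono c' hc' h h2
    refine M c c' hc hc' b hbS d hdS a haS hbda ?_ ?_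
    · obtain ⟨w, hw, hwi⟩ := hcol c hc (c a)
      have hpw := hc w trivial _ trivial (htA w hw)
      rw [hwi] at hpw
      rcases hall (t w) (htS w hw) with h | h | h
      · rw [h] at hpw; exact absurd rfl hpw
      · rw [h] at hpw; exact absurd h1.symm hpw
      · exact ⟨c, w, hw, h, by rw [hwi, h1], .refl⟩
    · exact L c' hc' b hbS d hdS a haS hbda (Or.inr h2.symm) (by rw [h2]; exact h4)
  intro c c' hc hc'
  replace hc : ProperOn G k Set.univ c := fun x _ y _ h => hc h
  replace hc' : ProperOn G k Set.univ c' := fun x _ y _ h => hc' h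
  apply steps_kempe
  by_cases p1 : c b = c a
  · by_cases p2 : c' d = c' a
    · exact mixed c c' hc hc' p1 p2
    · exact M c c' hc hc' d hdS a haS b hbS hdab
        (L c hc d hdS a haS b hbS hdab (Or.inl htwo) (hmono c hc p1))
        (L c' hc' d hdS a haS b hbS hdab (Or.inl htwo) p2)
  · by_cases p2 : c' b = c' a
    · by_cases p3 : c d = c a
      · exact steps_symm (mixed c' c hc' hc p2 p3)
      · exact M c c' hc hc' d hdS a haS b hbS hdab
          (L c hc d hdS a haS b hbS hdab (Or.inl htwo) p3)
          (L c' hc' d hdS a haS b hbS hdab (Or.inl htwo) (hmono c' hc' p2))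
    · exact M c c' hc hc' b hbS a haS d hdS hbad
        (L c hc b hbS a haS d hdS hbad (Or.inl htwo) p1)
        (L c' hc' b hbS a haS d hdS hbad (Or.inl htwo) p2)
end
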